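/- arXiv:1309.0595 — 7 statements merged into one kernel-verified Lean document; each statement's English description precedes it below -/
import Mathlib

section
/- Let p > 1 be real, set c(p) := p^p (p−1)^{1−p}, and let ν(p,0) be the unique probability measure supported in [0, c(p)] with moments ∫ x^n dν(p,0)(x) = C(np, n) for all n. Then the measure (1/p)·δ₀ + ((p−1)/p)·ν(p,0), where δ₀ is the Dirac measure at 0, is a probability measure whose n-th moment equals C(np − 1, n) for every natural number n. -/
open MeasureTheory Real

/-- Generalized binomial coefficient `C(a,n) = a(a-1)⋯(a-n+1)/n!`. -/
noncomputable def gbinom (a : ℝ) (n : ℕ) : ℝ :=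
  (∏ i ∈ Finset.range n, (a - i)) / (n.factorial : ℝ)

theorem nu_p_minus_one (p : ℝ) (hp : 1 < p) (ν : Measure ℝ)
    (hprob : IsProbabilityMeasure ν)
    (hsupp : ν (Set.Icc 0 (p ^ p * (p - 1) ^ (1 - p)))ᶜ = 0)
    (hmom : ∀ n : ℕ, (∫ x, x ^ n ∂ν) = gbinom ((n : ℝ) * p) n) :
    ∀ μ : Measure ℝ,
      μ = ENNReal.ofReal (1 / p) • Measure.dirac (0 : ℝ)
            + ENNReal.ofReal ((p - 1) / p) • ν →
      IsProbabilityMeasure μ ∧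
      ∀ n : ℕ, (∫ x, x ^ n ∂μ) = gbinom ((n : ℝ) * p - 1) n := by
  intro μ hμ
  have hp0 : 0 < p := by linarith
  have h1 : 0 ≤ 1 / p := by positivity
  have h2 : 0 ≤ (p - 1) / p := div_nonneg (by linarith) hp0.le
  have hsum : 1 / p + (p - 1) / p = 1 := by field_simp; ring
  refine ⟨⟨?_⟩, ?_⟩
  · rw [hμ]
    simp only [Measure.add_apply, Measure.smul_apply, measure_univ, smul_eq_mul, mul_one]
    rw [← ENNReal.ofReal_add h1 h2, hsum, ENNReal.ofReal_one]
  · intro n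
    have hae : ∀ᵐ x ∂ν, x ∈ Set.Icc 0 (p ^ p * (p - 1) ^ (1 - p)) := by
      rw [ae_iff]; exact hsupp
    have hint : Integrable (fun x : ℝ => x ^ n) ν := by
      refine Integrable.of_bound (C := (p ^ p * (p - 1) ^ (1 - p)) ^ n)
        (by fun_prop) ?_
      filter_upwards [hae] with x hx
      rw [Real.norm_eq_abs, abs_pow, abs_of_nonneg hx.1]
      exact pow_le_pow_left₀ hx.1 hx.2 n
    have hint0 : Integrable (fun x : ℝ => x ^ n) (Measure.dirac (0 : ℝ)) :=
      integrable_dirac (by simp)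
    rw [hμ, integral_add_measure (hint0.smul_measure ENNReal.ofReal_ne_top)
      (hint.smul_measure ENNReal.ofReal_ne_top), integral_smul_measure, integral_smul_measure,
      integral_dirac, hmom, ENNReal.toReal_ofReal h1, ENNReal.toReal_ofReal h2]
    simp only [smul_eq_mul]
    cases n with
    | zero => simpa [gbinom] using hsum
    | succ n =>
      unfold gbinom
      rw [Finset.prod_range_succ', Finset.prod_range_succ (fun i : ℕ => ((n + 1 : ℕ) : ℝ) * p - 1 - i)]
      have hQ : ∏ i ∈ Finset.range n, (((n + 1 : ℕ) : ℝ) * p - ((i + 1 : ℕ) : ℝ))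
          = ∏ i ∈ Finset.range n, (((n + 1 : ℕ) : ℝ) * p - 1 - (i : ℝ)) := by
        refine Finset.prod_congr rfl fun i _ => ?_
        push_cast; ring
      rw [hQ]
      have hf : ((n + 1).factorial : ℝ) ≠ 0 := by positivity
      push_cast at hf ⊢
      field_simp
      ring
end

section
/- Let p > 1 be real, set c(p) := p^p (p−1)^{1−p}, and let ν(p,0) be the unique probability measure supported in [0, c(p)] with moments ∫ x^n dν(p,0)(x) = C(np, n) for all n. Then the measure μ defined by μ(A) := ∫_A (x/p) dν(p,0)(x) is a probability measure whose n-th moment equals C(np + p − 1, n) for every natural number n. -/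
open MeasureTheory Real

theorem nu_p_pminusone (p : ℝ) (hp : 1 < p) (ν : Measure ℝ)
    (hprob : IsProbabilityMeasure ν)
    (hsupp : ν (Set.Icc 0 (p ^ p * (p - 1) ^ (1 - p)))ᶜ = 0)
    (hmom : ∀ n : ℕ, (∫ x, x ^ n ∂ν) = gbinom ((n : ℝ) * p) n) :
    ∀ μ : Measure ℝ,
      μ = ν.withDensity (fun x => ENNReal.ofReal (x / p)) →
      IsProbabilityMeasure μ ∧
      ∀ n : ℕ, (∫ x, x ^ n ∂μ) = gbinom ((n : ℝ) * p + p - 1) n := by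
  rintro μ rfl
  have hp0 : 0 < p := by linarith
  have hae : ∀ᵐ x ∂ν, 0 ≤ x := by
    have h : ∀ᵐ x ∂ν, x ∈ Set.Icc 0 (p ^ p * (p - 1) ^ (1 - p)) := by
      rw [ae_iff]; exact hsupp
    filter_upwards [h] with x hx using hx.1
  have key : ∀ n : ℕ, (∫ x, x ^ n ∂(ν.withDensity (fun x => ENNReal.ofReal (x / p))))
      = gbinom ((n : ℝ) * p + p - 1) n := by
    intro n
    rw [integral_withDensity_eq_integral_toReal_smul (by fun_prop) (by simp)]
    have h1 : (∫ x, (ENNReal.ofReal (x / p)).toReal • x ^ n ∂ν)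
        = ∫ x, p⁻¹ * x ^ (n + 1) ∂ν := by
      apply integral_congr_ae
      filter_upwards [hae] with x hx
      rw [ENNReal.toReal_ofReal (by positivity), smul_eq_mul]
      ring
    rw [h1, integral_const_mul, hmom]
    unfold gbinom
    rw [Finset.prod_range_succ', Nat.factorial_succ]
    have h2 : ∏ k ∈ Finset.range n, (((n + 1 : ℕ) : ℝ) * p - ((k + 1 : ℕ) : ℝ))
        = ∏ i ∈ Finset.range n, ((n : ℝ) * p + p - 1 - i) := by
      apply Finset.prod_congr rfl
      intro k _
      push_cast
      ring
    rw [h2]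
    have h3 : (n.factorial : ℝ) ≠ 0 := by positivity
    have h4 : (n : ℝ) + 1 ≠ 0 := by positivity
    push_cast
    field_simp
    ring
  refine ⟨?_, key⟩
  have h0 := key 0
  simp [gbinom, Measure.real] at h0
  constructor
  rw [ENNReal.toReal_eq_one_iff] at h0
  simpa using h0
end

section
/- Let r be a real number with −1 < r ≤ 1. Then for every natural number n, ∫₀⁴ x^n · cos(r · arccos(√(x/4))) / (π · √(x^{1−r}(4−x))) dx = C(2n + r, n). In particular (n = 0) the function V_{2,r}(x) = cos(r · arccos(√(x/4))) / (π √(x^{1−r}(4−x))) is a probability density on (0,4). -/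
open MeasureTheory Real

noncomputable def II (a b : ℝ) : ℝ := ∫ t in (0:ℝ)..(π/2), cos t ^ a * cos (b * t)

lemma gbinom_rec (r : ℝ) (hr : -1 < r) (n : ℕ) :
    gbinom (2 * ((n+1:ℕ):ℝ) + r) (n+1) =
      (2*n+2+r)*(2*n+1+r)/((n+1+r)*(n+1)) * gbinom (2*(n:ℝ)+r) n := by
  have h1 : (∏ i ∈ Finset.range (n+1), (2 * ((n+1:ℕ):ℝ) + r - i)) * (n+1+r) =
     (2*n+2+r)*(2*n+1+r) * ∏ i ∈ Finset.range n, (2*(n:ℝ)+r - i) := by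
    have := Finset.prod_range_succ (fun i : ℕ => (2 * ((n+1:ℕ):ℝ) + r - i)) (n+1)
    rw [Finset.prod_range_succ', Finset.prod_range_succ'] at this
    push_cast at this ⊢
    have e : ∀ i : ℕ, (2 * ((n:ℝ)+1) + r - ((i:ℝ) + 1 + 1)) = 2*n + r - i := by intro i; ring
    simp only [e] at this
    have e2 : 2 * ((n:ℝ)+1) + r - (n+1) = n+1+r := by ring
    rw [e2] at this
    rw [← this]; ring
  have hn : (0:ℝ) ≤ n := n.cast_nonneg
  have h2 : (n+1+r : ℝ) ≠ 0 := by linarith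
  have h3 : (n+1 : ℝ) ≠ 0 := by positivity
  have h4 : (n.factorial : ℝ) ≠ 0 := by positivity
  unfold gbinom
  rw [Nat.factorial_succ]
  push_cast at h1 ⊢
  rw [div_mul_div_comm, div_eq_div_iff (by positivity) (by positivity)]
  linear_combination ((n:ℝ)+1) * (n.factorial:ℝ) * h1

lemma II_neg (a b : ℝ) : II a (-b) = II a b := by
  simp [II]

lemma II_step (a b : ℝ) (ha : 0 < a) : a * II (a-1) (b-1) = (a+b) * II a b := by
  have hpi := Real.pi_pos
  have hc : ∀ t ∈ Set.Ioo (0:ℝ) (π/2), 0 < cos t := fun t ht =>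
    cos_pos_of_mem_Ioo ⟨by linarith [ht.1], ht.2⟩
  have hcont : Continuous (fun t : ℝ => cos t ^ a) :=
    continuous_cos.rpow_const (fun x => Or.inr ha.le)
  have hd : ∀ t ∈ Set.Ioo (0:ℝ) (π/2), HasDerivAt (fun t : ℝ => cos t ^ a)
      (-sin t * a * cos t ^ (a-1)) t := fun t ht =>
    (hasDerivAt_cos t).rpow_const (Or.inl (hc t ht).ne')
  have hi1 : IntervalIntegrable (fun t => sin t * a * cos t ^ (a-1)) volume 0 (π/2) := by
    apply intervalIntegral.intervalIntegrable_deriv_of_nonneg (g := fun t => - cos t ^ a)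
    · exact hcont.neg.continuousOn
    · intro t ht
      rw [min_eq_left (by positivity), max_eq_right (by positivity)] at ht
      exact (hd t ht).neg.congr_deriv (by ring)
    · intro t ht
      rw [min_eq_left (by positivity), max_eq_right (by positivity)] at ht
      have := sin_pos_of_pos_of_lt_pi ht.1 (by linarith [ht.2])
      have := hc t ht
      positivity
  have hi2 : IntervalIntegrable (fun t => sin t * a * cos t ^ (a-1) * sin (b*t)) volume 0 (π/2) :=
    hi1.mul_continuousOn (by fun_prop)
  have hi3 : IntervalIntegrable (fun t => cos t ^ a * cos (b*t)) volume 0 (π/2) :=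
    (hcont.mul (by fun_prop)).intervalIntegrable _ _
  have key : ∫ t in (0:ℝ)..(π/2), (b * (cos t ^ a * cos (b*t)) - sin t * a * cos t ^ (a-1) * sin (b*t)) = 0 := by
    rw [intervalIntegral.integral_eq_sub_of_hasDerivAt_of_le (f := fun t => cos t ^ a * sin (b*t)) (by positivity)]
    · simp [zero_rpow ha.ne']
    · exact (hcont.mul (by fun_prop)).continuousOn
    · intro t ht
      have h2 : HasDerivAt (fun t => sin (b*t)) (cos (b*t) * (b*1)) t :=
        ((hasDerivAt_id t).const_mul b).sin
      exact ((hd t ht).mul h2).congr_deriv (by ring)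
    · exact (hi3.const_mul b).sub hi2
  rw [intervalIntegral.integral_sub (hi3.const_mul b) hi2, intervalIntegral.integral_const_mul] at key
  have : a * II (a-1) (b-1) = ∫ t in (0:ℝ)..(π/2), (a * (cos t ^ a * cos (b*t)) + sin t * a * cos t ^ (a-1) * sin (b*t)) := by
    rw [II, ← intervalIntegral.integral_const_mul]
    rw [intervalIntegral.integral_of_le (by positivity), intervalIntegral.integral_of_le (by positivity),
      integral_Ioc_eq_integral_Ioo, integral_Ioc_eq_integral_Ioo]
    apply setIntegral_congr_fun measurableSet_Ioo
    intro t ht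
    have h1 : cos t ^ a = cos t ^ (a-1) * cos t := by
      rw [← rpow_add_one (hc t ht).ne']; congr 1; ring
    have h2 : cos ((b-1)*t) = cos (b*t) * cos t + sin (b*t) * sin t := by
      rw [← cos_sub]; congr 1; ring
    simp only [h1, h2]
    ring
  rw [this, intervalIntegral.integral_add (hi3.const_mul a) hi2, intervalIntegral.integral_const_mul]
  unfold II
  linarith

lemma II_rec (r : ℝ) (hr : -1 < r) (n : ℕ) :
    II (2*((n+1:ℕ):ℝ)+r) r = (2*n+2+r)*(2*n+1+r)/((n+1+r)*(n+1))/4 * II (2*n+r) r := by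
  have hn : (0:ℝ) ≤ n := n.cast_nonneg
  have h1 := II_step (2*n+2+r) r (by linarith)
  have h2 := II_step (2*n+1+r) (-(r-1)) (by linarith)
  rw [II_neg] at h2
  rw [show (-(r-1)-1:ℝ) = -r by ring, II_neg] at h2
  rw [show (2*n+1+r-1:ℝ) = 2*n+r by ring] at h2
  rw [show (2*n+2+r-1:ℝ) = 2*n+1+r by ring] at h1
  push_cast
  rw [show (2*((n:ℝ)+1)+r) = 2*n+2+r by ring]
  have h4 : (n+1+r : ℝ) ≠ 0 := by linarith
  have h3 : (n+1 : ℝ) ≠ 0 := by positivity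
  generalize II (2*n+2+r) r = X at *
  generalize II (2*n+r) r = Y at *
  generalize II (2*n+1+r) (r-1) = Z at *
  field_simp
  linear_combination (-2*(n+1)) * h1 - (2*n+2+r)*h2

lemma II_diag_pos (s : ℝ) (hs : 0 < s) : II s s = π / 2 ^ (s+1) := by
  have hpi := Real.pi_pos
  let f : ℂ → ℂ := fun z => (1+z) ^ (s:ℂ)
  have hsl : ∀ z : ℂ, ‖z‖ ≤ 1 → z ≠ -1 → 1 + z ∈ Complex.slitPlane := by
    intro z hz hz1
    by_contra h
    rw [Complex.mem_slitPlane_iff] at h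
    push Not at h
    have h1 : 1 + z.re ≤ 0 := by simpa using h.1
    have h2 : z.im = 0 := by simpa using h.2
    have h3 := (abs_le.1 ((Complex.abs_re_le_norm z).trans hz)).1
    apply hz1
    apply Complex.ext <;> simp [h2]
    linarith
  have hcontf : ContinuousOn f (Metric.closedBall 0 1) := by
    intro z hz
    apply ContinuousAt.continuousWithinAt
    by_cases h : z = -1
    · subst h
      have h0 : ContinuousAt (fun z : ℂ => z ^ (s:ℂ)) (1 + -1) := by
        rw [add_neg_cancel]
        exact Complex.continuousAt_cpow_const_of_re_pos (Or.inl le_rfl) (by simpa using hs)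
      exact ContinuousAt.comp (f := fun z : ℂ => 1 + z) h0 (by fun_prop)
    · exact ContinuousAt.cpow (by fun_prop) (by fun_prop) (hsl z (by simpa using hz) h)
  have hf : DiffContOnCl ℂ f (Metric.ball 0 |1|) := by
    rw [abs_one]
    refine ⟨?_, ?_⟩
    · intro z hz
      have hz' : ‖z‖ < 1 := by simpa using hz
      apply DifferentiableAt.differentiableWithinAt
      refine DifferentiableAt.cpow (by fun_prop) (by fun_prop) (hsl z hz'.le ?_)
      rintro rfl
      simp at hz'
    · exact hcontf.mono (by rw [closure_ball _ one_ne_zero])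
  have hA := hf.circleAverage
  simp only [Real.circleAverage] at hA
  have hcc : Continuous (fun t : ℝ => f (circleMap 0 1 t)) :=
    hcontf.comp_continuous (continuous_circleMap 0 1) (by intro t; simp [circleMap])
  have hper : Function.Periodic (fun t : ℝ => f (circleMap 0 1 t)) (2*π) := fun t => by
    simp only [periodic_circleMap 0 1 t]
  have hI : ∫ t in (0:ℝ)..(2*π), f (circleMap 0 1 t) = 2*π := by
    have : f 0 = 1 := by simp [f]
    rw [this] at hA
    have h2 : ((2*π:ℝ):ℂ) ≠ 0 := by exact_mod_cast (by positivity)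
    have h3 := congrArg (fun z : ℂ => ((2*π:ℝ):ℂ) * z) hA
    simp only [Complex.real_smul] at h3
    rw [Complex.ofReal_inv, mul_inv_cancel_left₀ h2] at h3
    rw [h3]; push_cast; ring
  have hsh := hper.intervalIntegral_add_eq 0 (-π)
  rw [zero_add, hI, show -π + 2*π = π by ring] at hsh
  let g : ℝ → ℝ := fun t => (f (circleMap 0 1 t)).re
  have hgc : Continuous g := Complex.continuous_re.comp hcc
  have hg : ∫ t in (-π)..π, g t = 2*π := by
    have := Complex.reCLM.intervalIntegral_comp_comm (hcc.intervalIntegrable (μ := volume) (-π) π)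
    rw [← hsh] at this
    simpa [g] using this
  have hgv : ∀ t ∈ Set.Ioo (-(π/2)) (π/2), g (2*t) = 2^s * (cos t ^ s * cos (s*t)) := by
    intro t ht
    have hc := cos_pos_of_mem_Ioo ht
    have e1 : 1 + circleMap 0 1 (2*t) = ((2*cos t : ℝ):ℂ) * Complex.exp (t * Complex.I) := by
      simp only [circleMap]
      push_cast
      rw [Complex.two_cos, add_mul, ← Complex.exp_add, ← Complex.exp_add]
      rw [show ((t:ℂ) * Complex.I + t*Complex.I) = 2*t*Complex.I by ring]
      simp [add_comm]
    have hl : Complex.log (((2*cos t : ℝ):ℂ) * Complex.exp (t * Complex.I)) = ((Real.log (2*cos t):ℝ):ℂ) + t * Complex.I := by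
      rw [Complex.log_ofReal_mul (by positivity) (Complex.exp_ne_zero _), Complex.log_exp]
      · simp; linarith [ht.1]
      · simp; linarith [ht.2]
    have hne : (((2*cos t : ℝ):ℂ) * Complex.exp (t * Complex.I)) ≠ 0 :=
      mul_ne_zero (by exact_mod_cast (by positivity)) (Complex.exp_ne_zero _)
    simp only [g, f]
    rw [e1, Complex.cpow_def_of_ne_zero hne, hl, Complex.exp_re, ← mul_assoc,
      ← mul_rpow (by norm_num) hc.le, rpow_def_of_pos (by positivity)]
    simp [mul_comm]
  have hgev : ∀ t ∈ Set.Ioo (0:ℝ) π, g (-t) = g t := by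
    intro t ht
    have h1 := hgv (t/2) ⟨by linarith [ht.1], by linarith [ht.2]⟩
    have h2 := hgv (-(t/2)) ⟨by linarith [ht.2], by linarith [ht.1]⟩
    rw [show 2 * (t/2) = t by ring] at h1
    rw [show 2 * -(t/2) = -t by ring] at h2
    rw [h1, h2]; simp
  have hhalf : ∫ t in (0:ℝ)..π, g t = π := by
    have h1 := intervalIntegral.integral_add_adjacent_intervals (hgc.intervalIntegrable (μ := volume) (-π) 0) (hgc.intervalIntegrable 0 π)
    have h2 : ∫ t in (-π)..0, g t = ∫ t in (0:ℝ)..π, g t := by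
      have := intervalIntegral.integral_comp_neg (a := 0) (b := π) g
      rw [neg_zero] at this
      rw [← this]
      rw [intervalIntegral.integral_of_le hpi.le, intervalIntegral.integral_of_le hpi.le,
        integral_Ioc_eq_integral_Ioo, integral_Ioc_eq_integral_Ioo]
      exact setIntegral_congr_fun measurableSet_Ioo hgev
    linarith
  have hsub : ∫ t in (0:ℝ)..(π/2), g (2*t) = π/2 := by
    rw [intervalIntegral.integral_comp_mul_left g two_ne_zero]
    rw [mul_zero, show 2*(π/2) = π by ring, hhalf, smul_eq_mul]; ring
  have hfin : ∫ t in (0:ℝ)..(π/2), g (2*t) = 2^s * II s s := by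
    rw [II, ← intervalIntegral.integral_const_mul]
    rw [intervalIntegral.integral_of_le (by positivity), intervalIntegral.integral_of_le (by positivity),
        integral_Ioc_eq_integral_Ioo, integral_Ioc_eq_integral_Ioo]
    exact setIntegral_congr_fun measurableSet_Ioo (fun t ht => hgv t ⟨by linarith [ht.1], ht.2⟩)
  have h2s : (0:ℝ) < 2^s := by positivity
  rw [rpow_add_one two_ne_zero, eq_div_iff (by positivity)]
  rw [hsub] at hfin
  linarith

lemma II_diag (r : ℝ) (hr : -1 < r) : II r r = π / 2 ^ (r+1) := by
  have h := II_step (r+1) (r+1) (by linarith)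
  rw [II_diag_pos (r+1) (by linarith), rpow_add_one two_ne_zero] at h
  simp only [add_sub_cancel_right] at h
  have h0 : r + 1 ≠ 0 := by linarith
  apply mul_left_cancel₀ h0
  rw [h]
  field_simp
  ring

lemma II_main (r : ℝ) (hr : -1 < r) (n : ℕ) :
    2^(2*(n:ℝ)+r+1)/π * II (2*n+r) r = gbinom (2*(n:ℝ)+r) n := by
  induction n with
  | zero =>
    simp [gbinom, II_diag r hr]
    have := Real.pi_pos
    have : (0:ℝ) < 2^(r+1) := by positivity
    field_simp
  | succ n ih =>
    rw [II_rec r hr, gbinom_rec r hr, ← ih]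
    have : (2:ℝ)^(2*((n+1:ℕ):ℝ)+r+1) = 4 * 2^(2*(n:ℝ)+r+1) := by
      rw [show 2*((n+1:ℕ):ℝ)+r+1 = 2 + (2*(n:ℝ)+r+1) by push_cast; ring, rpow_add two_pos]
      norm_num
    rw [this]; ring

lemma subst_main (r : ℝ) (n : ℕ) :
    (∫ x in (0:ℝ)..4,
        x ^ n * (Real.cos (r * Real.arccos (Real.sqrt (x / 4)))
          / (Real.pi * Real.sqrt (x ^ (1 - r) * (4 - x)))))
      = 2^(2*(n:ℝ)+r+1)/π * II (2*n+r) r := by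
  have hpi := Real.pi_pos
  have hinj : Set.InjOn (fun t : ℝ => 4 * cos t ^ 2) (Set.Ioo 0 (π/2)) := by
    intro x hx y hy h
    have hcx := cos_pos_of_mem_Ioo ⟨by linarith [hx.1], hx.2⟩
    have hcy := cos_pos_of_mem_Ioo ⟨by linarith [hy.1], hy.2⟩
    have h2 : cos x = cos y := by
      have : cos x ^ 2 = cos y ^ 2 := by simpa using h
      exact (sq_eq_sq₀ hcx.le hcy.le).1 this
    exact injOn_cos ⟨hx.1.le, by linarith [hx.2]⟩ ⟨hy.1.le, by linarith [hy.2]⟩ h2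
  have himg : (fun t : ℝ => 4 * cos t ^ 2) '' (Set.Ioo 0 (π/2)) = Set.Ioo 0 4 := by
    ext x
    constructor
    · rintro ⟨t, ht, rfl⟩
      have hc := cos_pos_of_mem_Ioo ⟨by linarith [ht.1], ht.2⟩
      have hs := sin_pos_of_pos_of_lt_pi ht.1 (by linarith [ht.2])
      have := sin_sq_add_cos_sq t
      exact ⟨by positivity, by show 4 * cos t ^ 2 < 4; nlinarith⟩
    · rintro ⟨h0, h4⟩
      have hp : 0 < √(x/4) := by positivity
      have hl : √(x/4) < 1 := by rw [sqrt_lt' one_pos]; linarith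
      refine ⟨arccos √(x/4), ⟨arccos_pos.2 hl, arccos_lt_pi_div_two.2 hp⟩, ?_⟩
      simp only
      rw [cos_arccos (by linarith) hl.le, sq_sqrt (by positivity)]; ring
  rw [intervalIntegral.integral_of_le (by norm_num), integral_Ioc_eq_integral_Ioo, ← himg,
    integral_image_eq_integral_abs_deriv_smul (f' := fun t => 4 * (2 * cos t * (-sin t))) measurableSet_Ioo _ hinj]
  · rw [II, ← intervalIntegral.integral_const_mul, intervalIntegral.integral_of_le (by positivity),
      integral_Ioc_eq_integral_Ioo]
    apply setIntegral_congr_fun measurableSet_Ioo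
    intro t ht
    have hc := cos_pos_of_mem_Ioo ⟨by linarith [ht.1], ht.2⟩
    have hs := sin_pos_of_pos_of_lt_pi ht.1 (by linarith [ht.2])
    have e1 : √(4 * cos t ^ 2 / 4) = cos t := by
      rw [mul_div_cancel_left₀ _ (by norm_num), sqrt_sq hc.le]
    have e2 : √((4 * cos t ^ 2)^(1-r) * (4 - 4 * cos t ^ 2)) = (2 * cos t)^(1-r) * (2 * sin t) := by
      have : (4 * cos t ^ 2)^(1-r) = ((2*cos t)^(1-r))^2 := by
        rw [show 4 * cos t ^ 2 = (2 * cos t) * (2*cos t) by ring, mul_rpow (by positivity) (by positivity)]; ring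
      rw [this, show 4 - 4 * cos t ^ 2 = (2 * sin t)^2 by rw [mul_pow, sin_sq]; ring, ← mul_pow,
        sqrt_sq (by positivity)]
    have e3 : |4 * (2 * cos t * (-sin t))| = 8 * cos t * sin t := by
      rw [abs_of_nonpos (by nlinarith [mul_pos hc hs])]; ring
    simp only [e1, e2, e3, smul_eq_mul]
    rw [arccos_cos ht.1.le (by linarith [ht.2])]
    have e4 : (2:ℝ)^(2*(n:ℝ)+r+1) * cos t ^ (2*(n:ℝ)+r) = 2 * (2*cos t)^(2*(n:ℝ)+r) := by
      rw [mul_rpow two_pos.le hc.le, rpow_add_one two_ne_zero]; ring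
    have e5 : (2*cos t)^(2*(n:ℝ)+r) * (2*cos t)^(1-r) = (4 * cos t ^2)^n * (2*cos t) := by
      rw [← rpow_add (by positivity), show 2*(n:ℝ)+r+(1-r) = ((2*n:ℕ):ℝ) + 1 by push_cast; ring,
        rpow_add_one (by positivity), rpow_natCast, pow_mul]; ring
    have hp : 0 < (2*cos t)^(1-r) := by positivity
    rw [show 2 ^ (2 * (n:ℝ) + r + 1) / π * (cos t ^ (2 * (n:ℝ) + r) * cos (r * t)) = (2 ^ (2 * (n:ℝ) + r + 1) * cos t ^ (2 * (n:ℝ) + r)) * cos (r * t) / π by ring, e4]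
    have e6 : (2*cos t)^(2*(n:ℝ)+r) = (4 * cos t ^2)^n * (2*cos t) / (2*cos t)^(1-r) := by
      rw [eq_div_iff hp.ne', e5]
    rw [e6]
    generalize (2*cos t)^(1-r) = A at *
    generalize (4 * cos t ^2)^n = B at *
    field_simp
    ring
  · intro t ht
    apply HasDerivAt.hasDerivWithinAt
    exact (((hasDerivAt_cos t).pow 2).const_mul 4).congr_deriv (by norm_num)

theorem density_p_two (r : ℝ) (hr1 : -1 < r) (hr2 : r ≤ 1) (n : ℕ) :
    (∫ x in (0:ℝ)..4,
        x ^ n * (Real.cos (r * Real.arccos (Real.sqrt (x / 4)))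
          / (Real.pi * Real.sqrt (x ^ (1 - r) * (4 - x)))))
      = gbinom (2 * (n : ℝ) + r) n := by
  rw [subst_main, II_main r hr1]
end

section
/- Define, for 0 < x < √(27)/2 and z := 4x²/27, the function V(x) := (1+√(1−z))^{1/3} · z^{−1/6} / (3π√(1−z)) + (1+√(1−z))^{−1/3} · z^{1/6} / (3π√(1−z)). Then for every natural number n, ∫₀^{√(27)/2} x^n V(x) dx = C(3n/2, n); in particular V is a probability density on (0, √(27)/2). -/
open MeasureTheory Real

/-- The density function `V_{3/2,0}` of the measure `ν(3/2,0)`. -/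
noncomputable def V320 (x : ℝ) : ℝ :=
  (1 + Real.sqrt (1 - 4 * x ^ 2 / 27)) ^ ((1:ℝ)/3) * (4 * x ^ 2 / 27) ^ (-(1:ℝ)/6)
      / (3 * Real.pi * Real.sqrt (1 - 4 * x ^ 2 / 27))
    + (1 + Real.sqrt (1 - 4 * x ^ 2 / 27)) ^ (-(1:ℝ)/3) * (4 * x ^ 2 / 27) ^ ((1:ℝ)/6)
      / (3 * Real.pi * Real.sqrt (1 - 4 * x ^ 2 / 27))

lemma gbinom_step (n : ℕ) : gbinom (3 * ((n + 2 : ℕ) : ℝ) / 2) (n + 2)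
    = gbinom (3 * (n : ℝ) / 2) n *
      (27 * ((n:ℝ) / 2 + 1 / 3) * ((n:ℝ) / 2 + 2 / 3) / (((n:ℝ) + 1) * ((n:ℝ) + 2))) := by
  unfold gbinom
  set a : ℝ := 3 * (n : ℝ) / 2 with ha
  have e : (3 * ((n + 2 : ℕ) : ℝ) / 2) = a + 3 := by push_cast; ring
  rw [e]
  have h1 : (∏ i ∈ Finset.range (n + 2), (a + 3 - (i:ℝ))) * (a - n + 1)
      = (a + 3) * (a + 2) * (a + 1) * ∏ i ∈ Finset.range n, (a - (i:ℝ)) := by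
    have h2 : ∏ i ∈ Finset.range (n + 3), (a + 3 - (i:ℝ))
        = (∏ i ∈ Finset.range (n + 2), (a + 3 - (i:ℝ))) * (a - n + 1) := by
      rw [Finset.prod_range_succ]; push_cast; ring
    rw [← h2, Finset.prod_range_succ', Finset.prod_range_succ', Finset.prod_range_succ']
    have h3 : ∏ i ∈ Finset.range n, (a + 3 - ((i + 1 + 1 + 1 : ℕ):ℝ))
       = ∏ i ∈ Finset.range n, (a - (i:ℝ)) := by
      apply Finset.prod_congr rfl
      intro i _; push_cast; ring
    rw [h3]; push_cast; ring
  have hn : a - n + 1 = (n:ℝ) / 2 + 1 := by rw [ha]; ring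
  have hp : (n:ℝ) / 2 + 1 ≠ 0 := by positivity
  rw [hn] at h1
  have h4 : (∏ i ∈ Finset.range (n + 2), (a + 3 - (i:ℝ)))
     = 27 * ((n:ℝ) / 2 + 1 / 3) * ((n:ℝ) / 2 + 2 / 3) * ∏ i ∈ Finset.range n, (a - (i:ℝ)) := by
    apply mul_right_cancel₀ hp
    rw [h1, ha]; ring
  rw [h4, Nat.factorial_succ, Nat.factorial_succ]
  have : (n.factorial : ℝ) ≠ 0 := by positivity
  push_cast
  field_simp
  ring

lemma gamma_form (n : ℕ) :
    Real.sqrt 27 ^ (n + 1) / (6 * π) *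
      (Real.Gamma ((n:ℝ) / 2 + 2 / 3) * Real.Gamma ((n:ℝ) / 2 + 1 / 3) / (n.factorial : ℝ))
      = gbinom (3 * (n : ℝ) / 2) n := by
  induction n using Nat.twoStepInduction with
  | zero =>
    have h := Real.Gamma_mul_Gamma_one_sub (1/3)
    rw [show π * (1/3) = π / 3 by ring, Real.sin_pi_div_three] at h
    norm_num at h
    have h27 : Real.sqrt 27 = 3 * Real.sqrt 3 := by
      rw [show (27:ℝ) = 3 ^ 2 * 3 by norm_num, Real.sqrt_mul (by norm_num), Real.sqrt_sq (by norm_num)]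
    simp [gbinom]
    rw [show (3:ℝ)⁻¹ = 1 / 3 by norm_num, h27, mul_comm (Real.Gamma (2/3)), h]
    have := Real.pi_pos
    have : Real.sqrt 3 ≠ 0 := by positivity
    field_simp
    norm_num
  | one =>
    have h := Real.Gamma_mul_Gamma_one_sub (1/6)
    rw [show π * (1/6) = π / 6 by ring, Real.sin_pi_div_six] at h
    norm_num at h
    have h2 : Real.Gamma (7/6) = 1/6 * Real.Gamma (1/6) := by
      rw [← Real.Gamma_add_one (by norm_num)]; norm_num
    simp [gbinom]
    norm_num
    rw [h2, show 1 / 6 * Real.Gamma (1/6) * Real.Gamma (5/6) = 1/6 * (Real.Gamma (1/6) * Real.Gamma (5/6)) by ring, h]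
    have := Real.pi_pos
    field_simp
    norm_num
  | more n ih _ =>
    rw [gbinom_step, ← ih]
    have e1 : (((n + 2 : ℕ) : ℝ)) / 2 + 2 / 3 = ((n:ℝ) / 2 + 2 / 3) + 1 := by push_cast; ring
    have e2 : (((n + 2 : ℕ) : ℝ)) / 2 + 1 / 3 = ((n:ℝ) / 2 + 1 / 3) + 1 := by push_cast; ring
    rw [e1, e2, Real.Gamma_add_one (by positivity), Real.Gamma_add_one (by positivity),
      Nat.factorial_succ, Nat.factorial_succ]
    have : (n.factorial : ℝ) ≠ 0 := by positivity
    have hs : Real.sqrt 27 ^ (n + 2 + 1) = Real.sqrt 27 ^ (n + 1) * 27 := by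
      rw [show n + 2 + 1 = (n + 1) + 2 by ring, pow_add, Real.sq_sqrt (by norm_num)]
    rw [hs]
    have := Real.pi_pos
    push_cast
    field_simp
    ring

lemma beta_aux (a b : ℝ) (ha : 0 < a) (hb : 0 < b) :
    IntervalIntegrable (fun u : ℝ => u ^ (a - 1) * (1 - u) ^ (b - 1)) volume 0 1 ∧
    ∫ u in (0:ℝ)..1, u ^ (a - 1) * (1 - u) ^ (b - 1)
      = Real.Gamma a * Real.Gamma b / Real.Gamma (a + b) := by
  have hc := Complex.betaIntegral_convergent (u := (a:ℂ)) (v := (b:ℂ)) (by simpa) (by simpa)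
  have key : ∀ u ∈ Set.Icc (0:ℝ) 1, (u:ℂ) ^ ((a:ℂ) - 1) * (1 - (u:ℂ)) ^ ((b:ℂ) - 1)
      = ((u ^ (a - 1) * (1 - u) ^ (b - 1) : ℝ) : ℂ) := by
    intro u hu
    rw [Complex.ofReal_mul, Complex.ofReal_cpow hu.1, Complex.ofReal_cpow (by linarith [hu.2])]
    push_cast; rfl
  constructor
  · rw [intervalIntegrable_iff_integrableOn_Ioc_of_le zero_le_one] at hc ⊢
    refine MeasureTheory.IntegrableOn.congr_fun hc.re ?_ measurableSet_Ioc
    intro u hu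
    simp only
    rw [key u ⟨hu.1.le, hu.2⟩]
    simp
  · have h := ProbabilityTheory.beta_eq_betaIntegralReal a b ha hb
    unfold ProbabilityTheory.beta at h
    rw [h, Complex.betaIntegral, intervalIntegral.integral_congr (g := fun u : ℝ =>
      ((u ^ (a - 1) * (1 - u) ^ (b - 1) : ℝ) : ℂ)), intervalIntegral.integral_ofReal,
      Complex.ofReal_re]
    intro u hu
    rw [Set.uIcc_of_le zero_le_one] at hu
    exact key u hu

lemma V_at (p : ℝ) (h1 : 1 / 2 < p) (h2 : p < 1) :
    V320 (Real.sqrt 27 * Real.sqrt (p * (1 - p)))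
      = (p ^ ((1:ℝ)/6) * (1 - p) ^ (-(1:ℝ)/6) + p ^ (-(1:ℝ)/6) * (1 - p) ^ ((1:ℝ)/6))
        / (3 * π * (2 * p - 1)) := by
  have hq : 0 < 1 - p := by linarith
  have hp : 0 < p := by linarith
  have e : 4 * (Real.sqrt 27 * Real.sqrt (p * (1 - p))) ^ 2 / 27 = 2 ^ 2 * p * (1 - p) := by
    rw [mul_pow, Real.sq_sqrt (by norm_num), Real.sq_sqrt (by positivity)]; ring
  have e2 : Real.sqrt (1 - 2 ^ 2 * p * (1 - p)) = 2 * p - 1 := by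
    rw [show 1 - 2 ^ 2 * p * (1 - p) = (2 * p - 1) ^ 2 by ring, Real.sqrt_sq (by linarith)]
  unfold V320
  rw [e, e2, show 1 + (2 * p - 1) = 2 * p by ring, ← add_div]
  have c : ∀ r : ℝ, (2 * p) ^ (2 * r) * (2 ^ 2 * p * (1 - p)) ^ (-r) = p ^ r * (1 - p) ^ (-r) := by
    intro r
    rw [Real.mul_rpow (by norm_num) hp.le, Real.mul_rpow (by positivity) hq.le,
      Real.mul_rpow (by positivity) hp.le, ← Real.rpow_natCast, ← Real.rpow_mul (by norm_num),
      show p ^ (2 * r) = p ^ r * p ^ r by rw [← Real.rpow_add hp]; ring_nf,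
      show ((2:ℕ):ℝ) * -r = -(2 * r) by push_cast; ring, Real.rpow_neg (by norm_num), Real.rpow_neg hp.le]
    have a1 : (2:ℝ) ^ (2 * r) ≠ 0 := (Real.rpow_pos_of_pos (by norm_num) _).ne'
    have a2 : p ^ r ≠ 0 := (Real.rpow_pos_of_pos hp _).ne'
    field_simp
  have c1 := c (1/6)
  have c2 := c (-(1/6))
  norm_num at c1 c2
  norm_num
  rw [c1, c2]

lemma pointwise (n : ℕ) (p : ℝ) (h1 : 1 / 2 < p) (h2 : p < 1) :
    |Real.sqrt 27 * ((1 - 2 * p) / (2 * Real.sqrt (p * (1 - p))))| •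
      ((Real.sqrt 27 * Real.sqrt (p * (1 - p))) ^ n * V320 (Real.sqrt 27 * Real.sqrt (p * (1 - p))))
    = Real.sqrt 27 ^ (n + 1) / (6 * π) *
      (p ^ ((n:ℝ)/2 + 2/3 - 1) * (1 - p) ^ ((n:ℝ)/2 + 1/3 - 1)
        + (1 - p) ^ ((n:ℝ)/2 + 2/3 - 1) * (1 - (1 - p)) ^ ((n:ℝ)/2 + 1/3 - 1)) := by
  have hq : 0 < 1 - p := by linarith
  have hp : 0 < p := by linarith
  have c : ∀ x : ℝ, 0 < x → x ^ ((n:ℝ)/2 + 2/3 - 1) = Real.sqrt x ^ n / Real.sqrt x * x ^ ((1:ℝ)/6)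
      ∧ x ^ ((n:ℝ)/2 + 1/3 - 1) = Real.sqrt x ^ n / Real.sqrt x * x ^ (-(1:ℝ)/6) := by
    intro x hx
    rw [Real.sqrt_eq_rpow, ← Real.rpow_natCast, ← Real.rpow_mul hx.le, ← Real.rpow_sub hx,
      ← Real.rpow_add hx, ← Real.rpow_add hx]
    constructor <;> congr 1 <;> ring
  rw [V_at p h1 h2, sub_sub_cancel, (c p hp).1, (c p hp).2, (c _ hq).1, (c _ hq).2,
    Real.sqrt_mul hp.le, smul_eq_mul]
  have s1 : 0 < Real.sqrt p := Real.sqrt_pos.2 hp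
  have s2 : 0 < Real.sqrt (1 - p) := Real.sqrt_pos.2 hq
  have s3 : 0 < Real.sqrt 27 := Real.sqrt_pos.2 (by norm_num)
  have habs : |Real.sqrt 27 * ((1 - 2 * p) / (2 * (Real.sqrt p * Real.sqrt (1 - p))))|
      = Real.sqrt 27 * ((2 * p - 1) / (2 * (Real.sqrt p * Real.sqrt (1 - p)))) := by
    rw [abs_of_nonpos]
    · ring
    · apply mul_nonpos_of_nonneg_of_nonpos s3.le
      apply div_nonpos_of_nonpos_of_nonneg <;> [linarith; positivity]
  rw [habs]
  have h3 : 2 * p - 1 ≠ 0 := by linarith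
  have := Real.pi_pos
  generalize p ^ ((1:ℝ)/6) = A
  generalize p ^ (-(1:ℝ)/6) = B
  generalize (1 - p) ^ ((1:ℝ)/6) = C
  generalize (1 - p) ^ (-(1:ℝ)/6) = D
  generalize Real.sqrt (1 - p) = y at *
  generalize Real.sqrt p = x at *
  field_simp
  ring

lemma image_eq : (fun p : ℝ => Real.sqrt 27 * Real.sqrt (p * (1 - p))) '' Set.Ioo (1/2) 1
    = Set.Ioo 0 (Real.sqrt 27 / 2) := by
  have s3 : 0 < Real.sqrt 27 := Real.sqrt_pos.2 (by norm_num)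
  have s4 : Real.sqrt 27 ^ 2 = 27 := Real.sq_sqrt (by norm_num)
  ext x
  constructor
  · rintro ⟨p, ⟨h1, h2⟩, rfl⟩
    have hq : 0 < 1 - p := by linarith
    have hp : 0 < p := by linarith
    refine ⟨by positivity, ?_⟩
    have : Real.sqrt (p * (1 - p)) < 1 / 2 := by
      rw [Real.sqrt_lt' (by norm_num)]
      nlinarith [mul_pos (sub_pos.2 h1) (sub_pos.2 h1)]
    simp only
    nlinarith
  · rintro ⟨h1, h2⟩
    have hx : 4 * x ^ 2 / 27 < 1 := by nlinarith
    have hx0 : 0 < 4 * x ^ 2 / 27 := by positivity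
    have t0 : 0 < Real.sqrt (1 - 4 * x ^ 2 / 27) := Real.sqrt_pos.2 (by linarith)
    have t1 : Real.sqrt (1 - 4 * x ^ 2 / 27) < 1 := by
      rw [Real.sqrt_lt' (by norm_num)]; linarith
    have t2 : Real.sqrt (1 - 4 * x ^ 2 / 27) ^ 2 = 1 - 4 * x ^ 2 / 27 := Real.sq_sqrt (by linarith)
    refine ⟨(1 + Real.sqrt (1 - 4 * x ^ 2 / 27)) / 2, ⟨by linarith, by linarith⟩, ?_⟩
    simp only
    rw [← Real.sqrt_mul (by norm_num)]
    rw [Real.sqrt_eq_iff_eq_sq _ h1.le]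
    · linear_combination (-27/4) * t2
    · apply mul_nonneg (by norm_num)
      apply mul_nonneg <;> linarith

lemma inj_f : Set.InjOn (fun p : ℝ => Real.sqrt 27 * Real.sqrt (p * (1 - p))) (Set.Ioo (1/2) 1) := by
  have s3 : Real.sqrt 27 ≠ 0 := (Real.sqrt_pos.2 (by norm_num)).ne'
  rintro p ⟨h1, h2⟩ q ⟨h3, h4⟩ h
  have h5 := mul_left_cancel₀ s3 h
  rw [Real.sqrt_inj (by apply mul_nonneg <;> linarith) (by apply mul_nonneg <;> linarith)] at h5
  have h6 : (p - q) * (p + q - 1) = 0 := by linear_combination -h5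
  rcases mul_eq_zero.1 h6 with h | h <;> linarith

lemma deriv_f (p : ℝ) (h1 : 1 / 2 < p) (h2 : p < 1) :
    HasDerivAt (fun p : ℝ => Real.sqrt 27 * Real.sqrt (p * (1 - p)))
      (Real.sqrt 27 * ((1 - 2 * p) / (2 * Real.sqrt (p * (1 - p))))) p := by
  have hq : 0 < 1 - p := by linarith
  have hp : 0 < p := by linarith
  have h : HasDerivAt (fun p : ℝ => p * (1 - p)) (1 - 2 * p) p := by
    have := (hasDerivAt_id p).mul ((hasDerivAt_id p).const_sub 1)
    exact this.congr_deriv (by simp only [id]; ring)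
  exact (h.sqrt (mul_pos hp hq).ne').const_mul _

theorem density_p_three_halves (n : ℕ) :
    (∫ x in (0:ℝ)..(Real.sqrt 27 / 2), x ^ n * V320 x)
      = gbinom (3 * (n : ℝ) / 2) n := by
  obtain ⟨hi, hv⟩ := beta_aux ((n:ℝ)/2 + 2/3) ((n:ℝ)/2 + 1/3) (by positivity) (by positivity)
  rw [intervalIntegral.integral_of_le (by positivity), integral_Ioc_eq_integral_Ioo, ← image_eq,
    integral_image_eq_integral_abs_deriv_smul measurableSet_Ioo
      (fun p hp => (deriv_f p hp.1 hp.2).hasDerivWithinAt) inj_f,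
    setIntegral_congr_fun measurableSet_Ioo (fun p hp => pointwise n p hp.1 hp.2),
    ← integral_Ioc_eq_integral_Ioo, ← intervalIntegral.integral_of_le (by norm_num),
    intervalIntegral.integral_const_mul]
  have hl : IntervalIntegrable (fun u : ℝ => u ^ ((n:ℝ)/2 + 2/3 - 1) * (1 - u) ^ ((n:ℝ)/2 + 1/3 - 1))
      volume 0 (1/2) := hi.mono_set (by
        rw [Set.uIcc_of_le (by norm_num), Set.uIcc_of_le (by norm_num)]
        exact Set.Icc_subset_Icc le_rfl (by norm_num))
  have hr : IntervalIntegrable (fun u : ℝ => u ^ ((n:ℝ)/2 + 2/3 - 1) * (1 - u) ^ ((n:ℝ)/2 + 1/3 - 1))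
      volume (1/2) 1 := hi.mono_set (by
        rw [Set.uIcc_of_le (by norm_num), Set.uIcc_of_le (by norm_num)]
        exact Set.Icc_subset_Icc (by norm_num) le_rfl)
  have e : ∫ p in (1/2:ℝ)..1, (1 - p) ^ ((n:ℝ)/2 + 2/3 - 1) * (1 - (1 - p)) ^ ((n:ℝ)/2 + 1/3 - 1)
      = ∫ u in (0:ℝ)..(1/2), u ^ ((n:ℝ)/2 + 2/3 - 1) * (1 - u) ^ ((n:ℝ)/2 + 1/3 - 1) := by
    rw [intervalIntegral.integral_comp_sub_left
      (fun u : ℝ => u ^ ((n:ℝ)/2 + 2/3 - 1) * (1 - u) ^ ((n:ℝ)/2 + 1/3 - 1)) 1]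
    norm_num
  rw [intervalIntegral.integral_add hr ?_, e, add_comm (∫ p in (1/2:ℝ)..1, _),
    intervalIntegral.integral_add_adjacent_intervals hl hr, hv,
    show (n:ℝ)/2 + 2/3 + ((n:ℝ)/2 + 1/3) = n + 1 by ring, Real.Gamma_nat_eq_factorial, gamma_form]
  have := (hl.comp_sub_left 1).symm
  rw [show (1:ℝ) - 1 / 2 = 1 / 2 by norm_num, sub_zero] at this
  exact this
end

section
/- Let p > 1 and 0 < r ≤ p be real numbers, set c := r/(p−1) and c(p) := p^p(p−1)^{1−p}. Let ν be the unique probability measure supported in [0, c(p)] with moments ∫ x^n dν(x) = C(np + r − 1, n) for all n, and let η be the probability measure on [0,1] with density c·x^{c−1}. Then the pushforward of the product measure ν ⊗ η under the multiplication map (x,y) ↦ xy (the Mellin convolution ν ∘ η) is a probability measure whose n-th moment equals C(np + r, n) · r/(np + r) for every natural number n, i.e. it equals the measure μ(p,r) with the Raney numbers as moments. -/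
open MeasureTheory Real

theorem gbinom_shift (a : ℝ) (n : ℕ) : gbinom (a - 1) n * a = gbinom a n * (a - n) := by
  unfold gbinom
  rw [div_mul_eq_mul_div, div_mul_eq_mul_div]
  congr 1
  rw [← Finset.prod_range_succ (fun i : ℕ => a - (i : ℝ)), Finset.prod_range_succ']
  simp only [Nat.cast_zero, sub_zero]
  congr 1
  apply Finset.prod_congr rfl
  intro i _
  push_cast
  ring

theorem eta_lintegral (c : ℝ) (hc : 0 < c) :
    ∫⁻ x in Set.Ioc (0:ℝ) 1, ENNReal.ofReal (c * x ^ (c - 1)) = 1 := by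
  have hi : IntegrableOn (fun x : ℝ => c * x ^ (c - 1)) (Set.Ioc 0 1) := by
    have := (intervalIntegral.intervalIntegrable_rpow' (a := 0) (b := 1)
      (r := c - 1) (by linarith)).const_mul c
    exact (intervalIntegrable_iff_integrableOn_Ioc_of_le zero_le_one).1 this
  rw [← ofReal_integral_eq_lintegral_ofReal hi]
  · rw [← intervalIntegral.integral_of_le zero_le_one, intervalIntegral.integral_const_mul,
      integral_rpow (Or.inl (by linarith))]
    simp [hc.ne']
  · filter_upwards [ae_restrict_mem measurableSet_Ioc] with x hx
    exact mul_nonneg hc.le (Real.rpow_nonneg hx.1.le _)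

theorem eta_moment (c : ℝ) (hc : 0 < c) (n : ℕ) :
    ∫ x, x ^ n ∂((volume.restrict (Set.Ioc (0:ℝ) 1)).withDensity
            (fun x => ENNReal.ofReal (c * x ^ (c - 1)))) = c / (n + c) := by
  rw [integral_withDensity_eq_integral_toReal_smul (by fun_prop)
    (Filter.Eventually.of_forall fun x => ENNReal.ofReal_lt_top)]
  have : ∫ x in Set.Ioc (0:ℝ) 1, (ENNReal.ofReal (c * x ^ (c - 1))).toReal • x ^ n
      = ∫ x in Set.Ioc (0:ℝ) 1, c * x ^ (n + c - 1) := by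
    apply setIntegral_congr_fun measurableSet_Ioc
    intro x hx
    simp only [smul_eq_mul]
    rw [ENNReal.toReal_ofReal (mul_nonneg hc.le (Real.rpow_nonneg hx.1.le _)), mul_assoc,
      ← Real.rpow_natCast x n, ← Real.rpow_add hx.1]
    congr 2
    ring
  have hn : (0:ℝ) ≤ n := n.cast_nonneg
  rw [this, ← intervalIntegral.integral_of_le zero_le_one, intervalIntegral.integral_const_mul,
      integral_rpow (Or.inl (by linarith))]
  have : (n:ℝ) + c ≠ 0 := by positivity
  simp [this, div_eq_mul_inv]

theorem mellin_nu_eta_eq_mu (p r : ℝ) (hp : 1 < p) (hr0 : 0 < r) (hrp : r ≤ p)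
    (ν : Measure ℝ) (hprob : IsProbabilityMeasure ν)
    (hsupp : ν (Set.Icc 0 (p ^ p * (p - 1) ^ (1 - p)))ᶜ = 0)
    (hmom : ∀ n : ℕ, (∫ x, x ^ n ∂ν) = gbinom ((n : ℝ) * p + r - 1) n) :
    ∀ η μ : Measure ℝ,
      η = (volume.restrict (Set.Ioc (0:ℝ) 1)).withDensity
            (fun x => ENNReal.ofReal ((r / (p - 1)) * x ^ (r / (p - 1) - 1))) →
      μ = Measure.map (fun q : ℝ × ℝ => q.1 * q.2) (ν.prod η) →
      IsProbabilityMeasure μ ∧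
      ∀ n : ℕ, (∫ x, x ^ n ∂μ)
        = gbinom ((n : ℝ) * p + r) n * r / ((n : ℝ) * p + r) := by
  intro η μ hη hμ
  have hp1 : 0 < p - 1 := by linarith
  have hc : 0 < r / (p - 1) := by positivity
  have hηp : IsProbabilityMeasure η := by
    constructor
    rw [hη, withDensity_apply _ MeasurableSet.univ, Measure.restrict_univ]
    exact eta_lintegral _ hc
  have hm : Measurable (fun q : ℝ × ℝ => q.1 * q.2) := by fun_prop
  refine ⟨?_, fun n => ?_⟩
  · rw [hμ]
    exact Measure.isProbabilityMeasure_map hm.aemeasurable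
  · rw [hμ, integral_map hm.aemeasurable (by fun_prop)]
    simp only [mul_pow]
    rw [integral_prod_mul (fun x : ℝ => x ^ n) (fun y : ℝ => y ^ n), hmom, hη, eta_moment _ hc]
    have hs := gbinom_shift ((n : ℝ) * p + r) n
    have hn : (0:ℝ) ≤ n := n.cast_nonneg
    have h1 : (n : ℝ) * p + r ≠ 0 := by positivity
    have h2 : (n : ℝ) * (p - 1) + r ≠ 0 := by positivity
    have h3 : r / (p - 1) / (n + r / (p - 1)) = r / ((n : ℝ) * (p - 1) + r) := by
      field_simp
    rw [h3, ← mul_div_assoc, div_eq_div_iff h2 h1]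
    linear_combination r * hs
end

section
/- Let p, r be real numbers. The binomial sequence (C(np + r, n))_{n≥0} is positive definite if and only if either (p ≥ 1 and −1 ≤ r ≤ p − 1) or (p ≤ 0 and p − 1 ≤ r ≤ 0). -/
/-- A sequence of reals is positive definite if all quadratic forms
`∑_{i,j=0}^{m} s_{i+j} α_i α_j` are nonnegative. -/
def IsPosDefSeq (s : ℕ → ℝ) : Prop :=
  ∀ m : ℕ, ∀ α : ℕ → ℝ,
    0 ≤ ∑ i ∈ Finset.range (m + 1), ∑ j ∈ Finset.range (m + 1), s (i + j) * α i * α j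

lemma gbinom_succ' (a : ℝ) (n : ℕ) : ((n:ℝ) + 1) * gbinom a (n+1) = a * gbinom (a-1) n := by
  unfold gbinom
  rw [Finset.prod_range_succ', Nat.factorial_succ]
  have h1 : (n.factorial : ℝ) ≠ 0 := by positivity
  have h2 : (n:ℝ) + 1 ≠ 0 := by positivity
  have : ∏ k ∈ Finset.range n, (a - ((k+1 : ℕ):ℝ)) = ∏ i ∈ Finset.range n, (a - 1 - (i:ℝ)) := by
    apply Finset.prod_congr rfl; intros; push_cast; ring
  rw [this]; push_cast; field_simp; ring

lemma gbinom_dual (a : ℝ) (n : ℕ) : gbinom ((n:ℝ) - 1 - a) n = (-1)^n * gbinom a n := by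
  unfold gbinom
  rw [← Finset.prod_range_reflect]
  have : ∏ j ∈ Finset.range n, ((n:ℝ) - 1 - a - ((n - 1 - j : ℕ):ℝ)) = ∏ j ∈ Finset.range n, ((-1) * (a - (j:ℝ))) := by
    apply Finset.prod_congr rfl
    intro j hj
    have hj := Finset.mem_range.1 hj
    have : ((n - 1 - j : ℕ):ℝ) = (n:ℝ) - 1 - j := by
      rw [Nat.cast_sub (by omega), Nat.cast_sub (by omega)]; simp
    rw [this]; ring
  rw [this, Finset.prod_mul_distrib]; simp; ring

lemma posdef_alt {s : ℕ → ℝ} (h : IsPosDefSeq s) : IsPosDefSeq (fun n => (-1)^n * s n) := by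
  intro m α
  have := h m (fun i => (-1)^i * α i)
  refine this.trans_eq ?_
  apply Finset.sum_congr rfl; intro i _
  apply Finset.sum_congr rfl; intro j _
  simp only [pow_add]; ring

lemma posdef_dual {p r : ℝ} (h : IsPosDefSeq (fun n : ℕ => gbinom ((n : ℝ) * p + r) n)) :
    IsPosDefSeq (fun n : ℕ => gbinom ((n : ℝ) * (1 - p) + (-1 - r)) n) := by
  have h2 := posdef_alt h
  convert h2 using 2 with n
  rw [← gbinom_dual]; congr 1; ring

lemma posdef_two {s : ℕ → ℝ} (h : IsPosDefSeq s) (i j : ℕ) (hij : i ≠ j) (x y : ℝ) :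
    0 ≤ s (2 * i) * x^2 + 2 * s (i + j) * x * y + s (2*j) * y^2 := by
  have := h (i + j) (fun k => (if k = i then x else 0) + (if k = j then y else 0))
  refine this.trans_eq ?_
  simp only [mul_add, add_mul, Finset.sum_add_distrib, mul_ite, ite_mul, mul_zero, zero_mul,
    Finset.sum_ite_eq', Finset.mem_range, Finset.sum_ite_irrel, Finset.sum_const_zero]
  have h1 : i < i + j + 1 := by omega
  have h2 : j < i + j + 1 := by omega
  simp [h1, h2]
  rw [add_comm j i, ← two_mul, ← two_mul]; ring

lemma posdef_cs {s : ℕ → ℝ} (h : IsPosDefSeq s) (i j : ℕ) : s (i + j) ^ 2 ≤ s (2 * i) * s (2 * j) := by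
  by_cases hij : i = j
  · subst hij; rw [two_mul]; nlinarith
  have h0 : ∀ t, 0 ≤ s (2*i) * (t * t) + (2 * s (i+j)) * t + s (2*j) := by
    intro t; have := posdef_two h i j hij t 1; nlinarith
  have := discrim_le_zero h0
  unfold discrim at this; nlinarith

lemma posdef_even {s : ℕ → ℝ} (h : IsPosDefSeq s) (i : ℕ) : 0 ≤ s (2 * i) := by
  have := posdef_two h i (i+1) (by omega) 1 0
  simpa using this

lemma posdef_shift {s : ℕ → ℝ} (h : IsPosDefSeq s) (k : ℕ) : IsPosDefSeq (fun n => s (n + 2 * k)) := by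
  intro m α
  have := h (k + m) (fun i => if i < k then 0 else α (i - k))
  refine this.trans_eq ?_
  rw [show k + m + 1 = k + (m + 1) by ring]
  rw [Finset.sum_range_add]
  rw [Finset.sum_eq_zero (s := Finset.range k), zero_add]
  · apply Finset.sum_congr rfl; intro i _
    rw [Finset.sum_range_add]
    rw [Finset.sum_eq_zero (s := Finset.range k), zero_add]
    · apply Finset.sum_congr rfl; intro j _
      have e : k + i + (k + j) = i + j + 2 * k := by ring
      simp [e]
    · intro j hj
      simp [Finset.mem_range.1 hj]
  · intro i hi
    apply Finset.sum_eq_zero; intro j _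
    simp [Finset.mem_range.1 hi]

lemma posdef_zero {s : ℕ → ℝ} (h : IsPosDefSeq s) (n : ℕ) (hn : s (2 * (n+1)) = 0) : s 1 = 0 ∧ s 2 = 0 := by
  have h2 : s 2 = 0 := by
    induction n with
    | zero => simpa using hn
    | succ n ih =>
      apply ih
      have := posdef_cs h (n+2) n
      rw [show 2 * (n+1+1) = 2 * (n+2) by ring] at hn
      rw [hn, zero_mul] at this
      rw [show 2 * (n+1) = n + 2 + n by ring]
      exact pow_eq_zero_iff (two_ne_zero) |>.1 (le_antisymm this (sq_nonneg _))
  refine ⟨?_, h2⟩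
  have := posdef_cs h 0 1
  simp [h2] at this
  exact pow_eq_zero_iff (two_ne_zero) |>.1 (le_antisymm (by simpa using this) (sq_nonneg _))

lemma gbinom_one (a : ℝ) : gbinom a 1 = a := by simp [gbinom]
lemma gbinom_zero (a : ℝ) : gbinom a 0 = 1 := by simp [gbinom]
lemma gbinom_two (a : ℝ) : gbinom a 2 = a * (a - 1) / 2 := by simp [gbinom, Finset.prod_range_succ]
lemma gbinom_three (a : ℝ) : gbinom a 3 = a * (a - 1) * (a - 2) / 6 := by
  simp [gbinom, Finset.prod_range_succ, Nat.factorial]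
lemma gbinom_four (a : ℝ) : gbinom a 4 = a * (a - 1) * (a - 2) * (a - 3) / 24 := by
  simp [gbinom, Finset.prod_range_succ, Nat.factorial]

lemma gbinom_nonpos (a : ℝ) (M d : ℕ) (h1 : 2 * (M:ℝ) ≤ a) (h2 : a < 2 * M + 1) :
    gbinom a (2 * M + 1 + (2 * d + 1)) ≤ 0 := by
  unfold gbinom
  apply div_nonpos_of_nonpos_of_nonneg _ (by positivity)
  rw [Finset.prod_range_add]
  apply mul_nonpos_of_nonneg_of_nonpos
  · apply Finset.prod_nonneg
    intro i hi
    have := Finset.mem_range.1 hi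
    have : (i:ℝ) ≤ 2 * M := by exact_mod_cast (by omega : i ≤ 2 * M)
    linarith
  · have : ∏ x ∈ Finset.range (2*d+1), (a - ((2*M+1+x : ℕ):ℝ)) = - ∏ x ∈ Finset.range (2*d+1), (((2*M+1+x : ℕ):ℝ) - a) := by
      rw [← neg_one_mul, show (-1:ℝ) = (-1)^(2*d+1) by rw [pow_succ, pow_mul]; simp]
      conv_rhs => rw [← Finset.card_range (2*d+1)]
      rw [← Finset.prod_const, Finset.card_range, ← Finset.prod_mul_distrib]
      apply Finset.prod_congr rfl; intros; ring
    rw [this, neg_nonpos]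
    apply Finset.prod_nonneg
    intro i _
    push_cast
    have : (0:ℝ) ≤ i := by positivity
    linarith

lemma not_posdef_half {p r : ℝ} (hp : 0 < p) (hp2 : p ≤ 1/2) :
    ¬ IsPosDefSeq (fun n : ℕ => gbinom ((n : ℝ) * p + r) n) := by
  intro h
  -- choose M
  obtain ⟨M, hM⟩ := exists_nat_gt (max (3 + r) (r + 1 + |r|))
  have hM1 : 3 + r < M := lt_of_le_of_lt (le_max_left _ _) hM
  have hM2 : r + 1 + |r| < M := lt_of_le_of_lt (le_max_right _ _) hM
  have hex : ∃ n : ℕ, 2 * (M:ℝ) ≤ ((2 * n : ℕ):ℝ) * p + r := by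
    obtain ⟨n, hn⟩ := exists_nat_gt ((2 * (M:ℝ) - r) / (2 * p))
    refine ⟨n, ?_⟩
    rw [div_lt_iff₀ (by positivity)] at hn
    push_cast; linarith
  classical
  let n := Nat.find hex
  have hn : 2 * (M:ℝ) ≤ ((2 * n : ℕ):ℝ) * p + r := Nat.find_spec hex
  have hMpos : (0:ℝ) ≤ M := by positivity
  have hn0 : n ≠ 0 := by
    intro h0
    rw [h0] at hn; simp at hn
    have := neg_abs_le r
    have := le_abs_self r
    linarith
  obtain ⟨k, hk⟩ := Nat.exists_eq_succ_of_ne_zero hn0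
  have hk2 : ¬ (2 * (M:ℝ) ≤ ((2 * k : ℕ):ℝ) * p + r) := Nat.find_min hex (by omega)
  push Not at hk2
  have hlt : ((2 * n : ℕ):ℝ) * p + r < 2 * M + 1 := by
    rw [hk]; push_cast at hk2 ⊢; nlinarith
  have hnM : M + 1 ≤ n := by
    have h1 : ((2 * n : ℕ):ℝ) * p ≤ n := by push_cast; nlinarith [(Nat.cast_nonneg n : (0:ℝ) ≤ n)]
    have h2 : (M:ℝ) + 1 < n := by linarith
    exact_mod_cast h2.le
  obtain ⟨d, hd⟩ := Nat.exists_eq_add_of_le hnM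
  have hle := gbinom_nonpos _ M d hn hlt
  have hge := posdef_even h n
  have e : 2 * M + 1 + (2 * d + 1) = 2 * n := by omega
  rw [e] at hle
  have h0 := le_antisymm hle hge
  rw [hk] at h0
  obtain ⟨h1, h2⟩ := posdef_zero h k h0
  simp only [gbinom_one, gbinom_two] at h1 h2
  push_cast at h1 h2
  have : r = -p := by linarith
  subst this
  nlinarith

lemma not_posdef_unit {p r : ℝ} (hp : 0 < p) (hp2 : p < 1) :
    ¬ IsPosDefSeq (fun n : ℕ => gbinom ((n : ℝ) * p + r) n) := by
  rcases le_total p (1/2) with h | h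
  · exact not_posdef_half hp h
  · intro h'
    exact not_posdef_half (by linarith) (by linarith) (posdef_dual h')

lemma posdef_quad {p r : ℝ} (h : IsPosDefSeq (fun n : ℕ => gbinom ((n : ℝ) * p + r) n)) :
    r * (r + 1) ≤ 2 * p * (p - 1) := by
  have := posdef_cs h 0 1
  norm_num [gbinom_one, gbinom_two, gbinom_zero] at this
  nlinarith

lemma not_posdef_far {p r : ℝ} (hp : 1 < p) (hr : r ≤ -1 - p) :
    ¬ IsPosDefSeq (fun n : ℕ => gbinom ((n : ℝ) * p + r) n) := by
  intro h
  have h1 := posdef_quad h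
  have h2 := posdef_cs h 1 2
  norm_num [gbinom_two, gbinom_three, gbinom_four] at h2
  have hp3 : 3 ≤ p := by nlinarith
  have hr2 : -(3 * p / 2) ≤ r := by
    by_contra hc
    push Not at hc
    nlinarith
  obtain ⟨S, hS⟩ : ∃ S, S = 3 * p + r := ⟨_, rfl⟩
  have hrS : r = S - 3 * p := by linarith
  subst hrS
  have hS1 : S + 1 ≤ 2 * p := by linarith
  have hS2 : 3 * p / 2 ≤ S := by linarith
  obtain ⟨d, hd⟩ : ∃ d, d = p - (S+1)/2 := ⟨_, rfl⟩
  have hpd : p = (S+1)/2 + d := by linarith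
  have hd0 : 0 ≤ d := by linarith
  have i1 : (S-p)*(S+p)*(S+p-3) ≤ (S-1)/2 * ((3*S+1)/2) * ((3*S-5)/2) := by
    rw [hpd]
    nlinarith [mul_nonneg hd0 hd0, mul_nonneg (mul_nonneg hd0 hd0) hd0, mul_nonneg hd0 (by linarith : 0 ≤ S - 9/2), mul_nonneg (mul_nonneg hd0 hd0) (by linarith : 0 ≤ S - 9/2), mul_nonneg hd0 (mul_nonneg (by linarith : 0 ≤ S - 9/2) (by linarith : 0 ≤ S - 9/2))]
  have i2 : (S-1-p)*(S-1+p)*(S+p-2) ≤ (S-3)/2 * ((3*S-1)/2) * ((3*S-3)/2) := by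
    rw [hpd]
    nlinarith [mul_nonneg hd0 hd0, mul_nonneg (mul_nonneg hd0 hd0) hd0, mul_nonneg hd0 (by linarith : 0 ≤ S - 9/2), mul_nonneg (mul_nonneg hd0 hd0) (by linarith : 0 ≤ S - 9/2), mul_nonneg hd0 (mul_nonneg (by linarith : 0 ≤ S - 9/2) (by linarith : 0 ≤ S - 9/2))]
  have hq : 0 ≤ S - 1 - p := by linarith
  have i3 := mul_le_mul i1 i2 (by
      apply mul_nonneg (mul_nonneg _ _) <;> linarith) (by
      apply mul_nonneg (mul_nonneg _ _) <;> linarith)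
  have i4 : 9 * ((9*S^2-1)*((3*S-5)*(S-3))) < 256 * (S^2 * (S-2)^2) := by
    have t1 : (3*S-5)*(S-3) ≤ 3*(S-2)^2 := by nlinarith
    have t2 : 0 ≤ (3*S-5)*(S-3) := by apply mul_nonneg <;> linarith
    have t3 : (9*S^2-1)*((3*S-5)*(S-3)) ≤ (9*S^2) * (3*(S-2)^2) := by
      apply mul_le_mul _ t1 t2 (by positivity); linarith
    have t4 : 0 < S^2 * (S-2)^2 := by
      have : 0 < S - 2 := by linarith
      have : 0 < S := by linarith
      positivity
    nlinarith
  have i5 := mul_lt_mul_of_pos_right i4 (show 0 < (S-1)^2 by have : 0 < S - 1 := by linarith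
                                                             positivity)
  nlinarith

open Filter Topology in
lemma slit_aux {z : ℂ} (hz : 0 < z.im) {t : ℝ} (ht : 0 ≤ t) : 1 + (t:ℂ) * z ∈ Complex.slitPlane := by
  rw [Complex.mem_slitPlane_iff]
  rcases ht.eq_or_lt with h | h
  · left; simp [← h]
  · right; simp; exact ⟨h.ne', hz.ne'⟩

lemma slit_one {z : ℂ} (hz : 0 < z.im) : 1 + z ∈ Complex.slitPlane := by
  simpa using slit_aux hz (t := 1) zero_le_one

lemma hasDerivAt_pow_t (b : ℝ) {z : ℂ} (hz : 0 < z.im) {t : ℝ} (ht : 0 ≤ t) :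
    HasDerivAt (fun t : ℝ => (1 + (t:ℂ) * z) ^ (b:ℂ)) ((b:ℂ) * (1 + (t:ℂ) * z) ^ ((b:ℂ) - 1) * z) t := by
  have h1 : HasDerivAt (fun t : ℂ => 1 + t * z) z (t:ℂ) := by
    simpa using ((hasDerivAt_id (t:ℂ)).mul_const z).const_add 1
  exact (HasDerivAt.cpow_const (f := fun t : ℂ => 1 + t * z) (c := (b:ℂ)) h1 (slit_aux hz ht)).comp_ofReal

lemma norm_bpow_le {b : ℝ} (hb : 1 ≤ b) {z : ℂ} {t : ℝ} (ht : 0 ≤ t) (ht1 : t ≤ 1) :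
    ‖(b:ℂ) * (1 + (t:ℂ) * z) ^ ((b:ℂ) - 1)‖ ≤ b * (1 + ‖z‖) ^ (b - 1) := by
  have : ((b:ℂ) - 1) = ((b - 1 : ℝ) : ℂ) := by push_cast; ring
  rw [this, norm_mul, Complex.norm_cpow_real, Complex.norm_real, Real.norm_of_nonneg (by linarith)]
  gcongr
  · refine (norm_add_le _ _).trans ?_
    simp only [norm_one, norm_mul, Complex.norm_real, Real.norm_of_nonneg ht]
    nlinarith [norm_nonneg z]

lemma pow_sub_one_bound {b : ℝ} (hb : 1 ≤ b) {z : ℂ} (hz : 0 < z.im) {t : ℝ} (ht : 0 ≤ t) (ht1 : t ≤ 1) :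
    ‖(1 + (t:ℂ) * z) ^ (b:ℂ) - 1‖ ≤ (b * (1 + ‖z‖) ^ (b - 1) * ‖z‖) * t := by
  have := norm_image_sub_le_of_norm_deriv_le_segment' (a := 0) (b := 1)
    (f := fun t : ℝ => (1 + (t:ℂ) * z) ^ (b:ℂ)) (f' := fun t : ℝ => (b:ℂ) * (1 + (t:ℂ) * z) ^ ((b:ℂ) - 1) * z)
    (C := b * (1 + ‖z‖) ^ (b - 1) * ‖z‖)
    (fun x hx => (hasDerivAt_pow_t b hz hx.1).hasDerivWithinAt)
    (fun x hx => by
      rw [norm_mul]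
      exact mul_le_mul_of_nonneg_right (norm_bpow_le hb hx.1 hx.2.le) (norm_nonneg _))
    t ⟨ht, ht1⟩
  simpa using this

noncomputable def Gb (b : ℝ) (z : ℂ) : ℂ := ∫ t in (0:ℝ)..1, ((1 + (t:ℂ) * z) ^ (b:ℂ) - 1) / (t:ℂ)

lemma Gb_bound {b : ℝ} (hb : 1 ≤ b) {z : ℂ} (hz : 0 < z.im) {t : ℝ} (ht : 0 < t) (ht1 : t ≤ 1) :
    ‖((1 + (t:ℂ) * z) ^ (b:ℂ) - 1) / (t:ℂ)‖ ≤ (b * (1 + ‖z‖) ^ (b - 1) * ‖z‖) := by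
  rw [norm_div, Complex.norm_real, Real.norm_of_nonneg ht.le, div_le_iff₀ ht]
  exact pow_sub_one_bound hb hz ht.le ht1

open MeasureTheory Filter Topology

lemma Gb_meas (b : ℝ) {z : ℂ} (hz : 0 < z.im) :
    AEStronglyMeasurable (fun t : ℝ => ((1 + (t:ℂ) * z) ^ (b:ℂ) - 1) / (t:ℂ)) (volume.restrict (Set.uIoc 0 1)) := by
  apply ContinuousOn.aestronglyMeasurable _ measurableSet_uIoc
  rw [Set.uIoc_of_le zero_le_one]
  intro t ht
  apply ContinuousAt.continuousWithinAt
  apply ContinuousAt.div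
  · exact (hasDerivAt_pow_t b hz ht.1.le).continuousAt.sub continuousAt_const
  · exact Complex.continuous_ofReal.continuousAt
  · exact_mod_cast ht.1.ne'

lemma Gb_hasDerivAt {b : ℝ} (hb : 1 ≤ b) {z : ℂ} (hz : 0 < z.im) :
    HasDerivAt (Gb b) (((1 + z) ^ (b:ℂ) - 1) / z) z := by
  have hz0 : z ≠ 0 := by rintro rfl; simp at hz
  have hcont : ContinuousOn (fun t : ℝ => (b:ℂ) * (1 + (t:ℂ) * z) ^ ((b:ℂ) - 1)) (Set.uIcc 0 1) := by
    rw [Set.uIcc_of_le zero_le_one]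
    intro t ht
    apply ContinuousAt.continuousWithinAt
    have := (hasDerivAt_pow_t (b-1) hz ht.1).continuousAt.const_mul (b:ℂ)
    push_cast at this
    exact this
  have hopen : IsOpen {w : ℂ | 0 < w.im} := isOpen_lt continuous_const Complex.continuous_im
  have key := (intervalIntegral.hasDerivAt_integral_of_dominated_loc_of_deriv_le (μ := volume) (a := 0) (b := 1)
    (F := fun (z:ℂ) (t:ℝ) => ((1 + (t:ℂ) * z) ^ (b:ℂ) - 1) / (t:ℂ))
    (F' := fun (z:ℂ) (t:ℝ) => (b:ℂ) * (1 + (t:ℂ) * z) ^ ((b:ℂ) - 1)) (x₀ := z)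
    (s := {w : ℂ | 0 < w.im} ∩ Metric.ball z 1) (bound := fun _ => b * (1 + (‖z‖ + 1)) ^ (b - 1))
    (inter_mem (hopen.mem_nhds hz) (Metric.ball_mem_nhds _ one_pos))
    (by filter_upwards [hopen.mem_nhds hz] with w hw; exact Gb_meas b hw)
    (by
      rw [intervalIntegrable_iff]
      rw [Set.uIoc_of_le zero_le_one]
      have hm := Gb_meas b hz
      rw [Set.uIoc_of_le zero_le_one] at hm
      refine Integrable.of_bound hm (b * (1 + ‖z‖) ^ (b - 1) * ‖z‖) ?_
      rw [ae_restrict_iff' measurableSet_Ioc]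
      refine ae_of_all _ fun t ht => ?_
      exact Gb_bound hb hz ht.1 ht.2)
    ((hcont.mono Set.uIoc_subset_uIcc).aestronglyMeasurable measurableSet_uIoc)
    (ae_of_all _ fun t ht w hw => by
      rw [Set.uIoc_of_le zero_le_one] at ht
      refine (norm_bpow_le hb ht.1.le ht.2).trans ?_
      have h3 := hw.2
      rw [Metric.mem_ball, dist_eq_norm] at h3
      have h4 := norm_le_norm_add_norm_sub' w z
      have h5 : ‖w‖ ≤ ‖z‖ + 1 := by linarith
      gcongr)
    (by simp)
    (ae_of_all _ fun t ht w hw => by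
      rw [Set.uIoc_of_le zero_le_one] at ht
      have ht0 : (t:ℂ) ≠ 0 := by exact_mod_cast ht.1.ne'
      have h1 : HasDerivAt (fun w : ℂ => 1 + (t:ℂ) * w) t w := by
        simpa using ((hasDerivAt_id w).const_mul (t:ℂ)).const_add 1
      have h2 := ((HasDerivAt.cpow_const (f := fun w : ℂ => 1 + (t:ℂ) * w) (c := (b:ℂ)) h1 (slit_aux hw.1 ht.1.le)).sub_const 1).div_const (t:ℂ)
      rw [mul_div_cancel_right₀ _ ht0] at h2
      exact h2)).2
  have hval : ∫ t in (0:ℝ)..1, (b:ℂ) * (1 + (t:ℂ) * z) ^ ((b:ℂ) - 1) = ((1 + z) ^ (b:ℂ) - 1) / z := by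
    rw [intervalIntegral.integral_eq_sub_of_hasDerivAt (f := fun t : ℝ => (1 + (t:ℂ) * z) ^ (b:ℂ) / z)]
    · simp [sub_div]
    · intro t ht
      rw [Set.uIcc_of_le zero_le_one] at ht
      have := (hasDerivAt_pow_t b hz ht.1).div_const z
      rw [mul_div_cancel_right₀ _ hz0] at this
      exact this
    · exact hcont.intervalIntegrable
  rw [hval] at key
  exact key

lemma Gb_tendsto {b : ℝ} (hb : 1 ≤ b) {x : ℝ} (hx : -1 ≤ x) (u : ℕ → ℂ) (hu : ∀ k, 0 < (u k).im)
    (hlim : Tendsto u atTop (𝓝 (x:ℂ))) : ∃ y : ℝ, Tendsto (fun k => Gb b (u k)) atTop (𝓝 (y:ℂ)) := by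
  refine ⟨∫ t in (0:ℝ)..1, ((1 + t * x) ^ b - 1) / t, ?_⟩
  obtain ⟨M, hM⟩ := hlim.norm.bddAbove_range
  have hM' : ∀ k, ‖u k‖ ≤ M := fun k => hM ⟨k, rfl⟩
  have hM0 : 0 ≤ M := (norm_nonneg _).trans (hM' 0)
  have : ((∫ t in (0:ℝ)..1, ((1 + t * x) ^ b - 1) / t : ℝ) : ℂ) = ∫ t in (0:ℝ)..1, ((1 + (t:ℂ) * (x:ℂ)) ^ (b:ℂ) - 1) / (t:ℂ) := by
    rw [← intervalIntegral.integral_ofReal]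
    apply intervalIntegral.integral_congr
    intro t ht
    rw [Set.uIcc_of_le zero_le_one] at ht
    simp only
    rw [Complex.ofReal_div, Complex.ofReal_sub, Complex.ofReal_cpow]
    · push_cast; rfl
    · nlinarith [ht.1, ht.2]
  rw [this]
  apply intervalIntegral.tendsto_integral_filter_of_dominated_convergence (fun _ => b * (1 + M) ^ (b - 1) * M)
  · exact Eventually.of_forall fun k => Gb_meas b (hu k)
  · refine Eventually.of_forall fun k => ae_of_all _ fun t ht => ?_
    rw [Set.uIoc_of_le zero_le_one] at ht
    refine (Gb_bound hb (hu k) ht.1 ht.2).trans ?_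
    have := hM' k
    gcongr
  · simp
  · have hne : ∀ᵐ t : ℝ, t ≠ 1 := by simp [ae_iff]
    filter_upwards [hne] with t ht1 ht
    rw [Set.uIoc_of_le zero_le_one] at ht
    have hlt : t < 1 := lt_of_le_of_ne ht.2 ht1
    have hs : 1 + (t:ℂ) * (x:ℂ) ∈ Complex.slitPlane := by
      rw [Complex.mem_slitPlane_iff]; left
      simp; nlinarith [ht.1]
    apply Tendsto.div_const
    apply Tendsto.sub_const
    have h1 : Tendsto (fun k => 1 + (t:ℂ) * u k) atTop (𝓝 (1 + (t:ℂ) * (x:ℂ))) := (hlim.const_mul _).const_add _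
    exact h1.cpow tendsto_const_nhds hs

structure GoodPath (γ γ' : ℝ → ℂ) (δ c : ℕ → ℝ) (xA xB : ℝ) : Prop where
  hle : ∀ k, δ k ≤ c k
  hd : ∀ k, ∀ φ ∈ Set.Icc (δ k) (c k), HasDerivAt γ (γ' φ) φ
  hc : ∀ k, ContinuousOn γ' (Set.Icc (δ k) (c k))
  him : ∀ k, ∀ φ ∈ Set.Icc (δ k) (c k), 0 < (γ φ).im
  hA : -1 ≤ xA
  hA0 : xA ≠ 0
  hB : -1 ≤ xB
  hB0 : xB ≠ 0
  limA : Tendsto (fun k => γ (δ k)) atTop (𝓝 (xA:ℂ))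
  limB : Tendsto (fun k => γ (c k)) atTop (𝓝 (xB:ℂ))
  hlog : Tendsto (fun k => (∫ φ in (δ k)..(c k), (γ φ)⁻¹ * γ' φ).im) atTop (𝓝 Real.pi)

noncomputable def powh (a : ℝ) (m : ℕ) (z : ℂ) : ℂ := (1 + z) ^ (a:ℂ) * (z ^ m)⁻¹

lemma powh_hasDerivAt (a : ℝ) (m : ℕ) {z : ℂ} (hz : 0 < z.im) :
    HasDerivAt (powh a m) (a * powh (a - 1) m z - m * powh a (m + 1) z) z := by
  have hz0 : z ≠ 0 := by rintro rfl; simp at hz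
  have h1 : HasDerivAt (fun z : ℂ => 1 + z) 1 z := by
    simpa using (hasDerivAt_id z).const_add 1
  have h2 := HasDerivAt.cpow_const (f := fun w : ℂ => 1 + w) (c := (a:ℂ)) h1 (slit_one hz)
  have h3 := (hasDerivAt_pow m z).inv (pow_ne_zero m hz0)
  have h4 := h2.mul h3
  unfold powh
  refine h4.congr_deriv ?_
  push_cast
  cases m with
  | zero => simp
  | succ m =>
    simp only [Nat.add_sub_cancel, Pi.inv_apply]
    field_simp
    push_cast
    ring

lemma powh_cont (a : ℝ) (m : ℕ) : ContinuousOn (powh a m) {z : ℂ | 0 < z.im} :=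
  fun _ hz => (powh_hasDerivAt a m hz).continuousAt.continuousWithinAt

lemma powh_lim {a : ℝ} (ha : 0 < a) (m : ℕ) {x : ℝ} (hx : -1 ≤ x) (hx0 : x ≠ 0) {u : ℕ → ℂ}
    (hu : Tendsto u atTop (𝓝 (x:ℂ))) : ∃ y : ℝ, Tendsto (fun k => powh a m (u k)) atTop (𝓝 (y:ℂ)) := by
  refine ⟨(1 + x) ^ a * (x ^ m)⁻¹, ?_⟩
  unfold powh
  rw [Complex.ofReal_mul, Complex.ofReal_cpow (by linarith)]
  push_cast
  apply Tendsto.mul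
  · have h1 : Tendsto (fun k => 1 + u k) atTop (𝓝 (1 + (x:ℂ))) := hu.const_add _
    have h2 : ContinuousAt (fun z : ℂ => z ^ (a:ℂ)) (1 + (x:ℂ)) :=
      Complex.continuousAt_cpow_const_of_re_pos (Or.inl (by simp; linarith)) (by simpa using ha)
    exact h2.tendsto.comp h1
  · exact (hu.pow m).inv₀ (pow_ne_zero _ (by exact_mod_cast hx0))

section
variable {γ γ' : ℝ → ℂ} {δ c : ℕ → ℝ} {xA xB : ℝ}

lemma GoodPath.contOn (P : GoodPath γ γ' δ c xA xB) {h : ℂ → ℂ} (hh : ContinuousOn h {z : ℂ | 0 < z.im}) (k : ℕ) :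
    ContinuousOn (fun φ => h (γ φ) * γ' φ) (Set.Icc (δ k) (c k)) := by
  apply ContinuousOn.mul _ (P.hc k)
  exact hh.comp (fun φ hφ => (P.hd k φ hφ).continuousAt.continuousWithinAt) (fun φ hφ => P.him k φ hφ)

lemma GoodPath.intble (P : GoodPath γ γ' δ c xA xB) {h : ℂ → ℂ} (hh : ContinuousOn h {z : ℂ | 0 < z.im}) (k : ℕ) :
    IntervalIntegrable (fun φ => h (γ φ) * γ' φ) volume (δ k) (c k) := by
  apply ContinuousOn.intervalIntegrable
  rw [Set.uIcc_of_le (P.hle k)]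
  exact P.contOn hh k

lemma GoodPath.exact' (P : GoodPath γ γ' δ c xA xB) {H h : ℂ → ℂ} (hh : ContinuousOn h {z : ℂ | 0 < z.im})
    (hH : ∀ z : ℂ, 0 < z.im → HasDerivAt H (h z) z)
    (yA : ∃ y : ℝ, Tendsto (fun k => H (γ (δ k))) atTop (𝓝 (y:ℂ)))
    (yB : ∃ y : ℝ, Tendsto (fun k => H (γ (c k))) atTop (𝓝 (y:ℂ))) :
    Tendsto (fun k => (∫ φ in (δ k)..(c k), h (γ φ) * γ' φ).im) atTop (𝓝 0) := by
  obtain ⟨y1, h1⟩ := yA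
  obtain ⟨y2, h2⟩ := yB
  have e : ∀ k, ∫ φ in (δ k)..(c k), h (γ φ) * γ' φ = H (γ (c k)) - H (γ (δ k)) := by
    intro k
    rw [intervalIntegral.integral_eq_sub_of_hasDerivAt (f := fun φ => H (γ φ))]
    · intro φ hφ
      rw [Set.uIcc_of_le (P.hle k)] at hφ
      exact (hH _ (P.him k φ hφ)).comp φ (P.hd k φ hφ)
    · exact P.intble hh k
  simp only [e]
  have := (Complex.continuous_im.tendsto _).comp (h2.sub h1)
  simpa [Function.comp_def] using this

lemma GoodPath.T0big (P : GoodPath γ γ' δ c xA xB) {b : ℝ} (hb : 1 ≤ b) :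
    Tendsto (fun k => (∫ φ in (δ k)..(c k), powh b 1 (γ φ) * γ' φ).im) atTop (𝓝 Real.pi) := by
  have hinv : ContinuousOn (fun z : ℂ => z⁻¹) {z : ℂ | 0 < z.im} := by
    apply continuousOn_inv₀.mono
    rintro z hz rfl; simp at hz
  have hh : ContinuousOn (fun z : ℂ => ((1 + z) ^ (b:ℂ) - 1) / z) {z : ℂ | 0 < z.im} := by
    have := (powh_cont b 1).sub hinv
    refine this.congr fun z _ => ?_
    simp [powh]; ring
  have h1 := P.exact' (H := Gb b) hh (fun z hz => Gb_hasDerivAt hb hz)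
    (Gb_tendsto hb P.hA _ (fun k => P.him k _ ⟨le_rfl, P.hle k⟩) P.limA)
    (Gb_tendsto hb P.hB _ (fun k => P.him k _ ⟨P.hle k, le_rfl⟩) P.limB)
  have h2 := h1.add P.hlog
  rw [zero_add] at h2
  refine h2.congr fun k => ?_
  rw [← Complex.add_im, ← intervalIntegral.integral_add (P.intble hh k) (P.intble hinv k)]
  congr 1
  apply intervalIntegral.integral_congr
  intro φ _
  simp [powh]; ring

lemma GoodPath.T0shift (P : GoodPath γ γ' δ c xA xB) {b : ℝ} (hb : -1 < b)
    (h : Tendsto (fun k => (∫ φ in (δ k)..(c k), powh (b+1) 1 (γ φ) * γ' φ).im) atTop (𝓝 Real.pi)) :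
    Tendsto (fun k => (∫ φ in (δ k)..(c k), powh b 1 (γ φ) * γ' φ).im) atTop (𝓝 Real.pi) := by
  have hb1 : 0 < b + 1 := by linarith
  have hb2 : ((b:ℂ) + 1) ≠ 0 := by exact_mod_cast hb1.ne'
  have h1 := P.exact' (H := fun z => powh (b+1) 0 z / ((b:ℂ)+1)) (powh_cont b 0) (fun z hz => by
      have := (powh_hasDerivAt (b+1) 0 hz).div_const ((b:ℂ)+1)
      refine this.congr_deriv ?_
      rw [add_sub_cancel_right]
      push_cast
      field_simp
      ring)
    (by
      obtain ⟨y, hy⟩ := powh_lim hb1 0 P.hA P.hA0 P.limA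
      refine ⟨y / (b+1), ?_⟩
      push_cast
      exact hy.div_const _)
    (by
      obtain ⟨y, hy⟩ := powh_lim hb1 0 P.hB P.hB0 P.limB
      refine ⟨y / (b+1), ?_⟩
      push_cast
      exact hy.div_const _)
  have h2 := h.sub h1
  rw [sub_zero] at h2
  refine h2.congr fun k => ?_
  rw [← Complex.sub_im, ← intervalIntegral.integral_sub (P.intble (powh_cont _ _) k) (P.intble (powh_cont _ _) k)]
  congr 1
  apply intervalIntegral.integral_congr
  intro φ hφ
  rw [Set.uIcc_of_le (P.hle k)] at hφ
  have him := P.him k φ hφ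
  have hz0 : γ φ ≠ 0 := by intro h0; rw [h0] at him; simp at him
  have hz1 : 1 + γ φ ≠ 0 := Complex.slitPlane_ne_zero (slit_one him)
  simp only [powh]
  push_cast
  rw [Complex.cpow_add _ _ hz1, Complex.cpow_one]
  field_simp
  ring

lemma GoodPath.T (P : GoodPath γ γ' δ c xA xB) (n : ℕ) : ∀ a : ℝ, -1 < a - n →
    Tendsto (fun k => (∫ φ in (δ k)..(c k), powh a (n+1) (γ φ) * γ' φ).im) atTop (𝓝 (Real.pi * gbinom a n)) := by
  induction n with
  | zero =>
    intro a ha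
    simp at ha
    rw [gbinom_zero, mul_one]
    exact P.T0shift ha (P.T0shift (by linarith) (P.T0big (by linarith)))
  | succ n ih =>
    intro a ha
    push_cast at ha
    have hn : (0:ℝ) ≤ n := by positivity
    have ha0 : 0 < a := by linarith
    have hn1 : (n:ℝ) + 1 ≠ 0 := by positivity
    have i1 := ih (a - 1) (by linarith)
    have hcont : ContinuousOn (fun z => a * powh (a - 1) (n+1) z - ((n+1:ℕ):ℂ) * powh a (n + 1 + 1) z) {z : ℂ | 0 < z.im} :=
      ((powh_cont _ _).const_smul (a:ℂ)).sub ((powh_cont _ _).const_smul ((n+1:ℕ):ℂ))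
    have h1 := P.exact' (H := powh a (n+1)) hcont (fun z hz => powh_hasDerivAt a (n+1) hz)
      (powh_lim ha0 _ P.hA P.hA0 P.limA) (powh_lim ha0 _ P.hB P.hB0 P.limB)
    have h2 := ((i1.const_mul a).sub h1).const_mul (((n:ℝ)+1)⁻¹)
    have e : ((n:ℝ)+1)⁻¹ * (a * (Real.pi * gbinom (a-1) n) - 0) = Real.pi * gbinom a (n+1) := by
      have := gbinom_succ' a n
      field_simp
      linear_combination (-Real.pi) * this
    rw [e] at h2
    refine h2.congr fun k => ?_
    have e2 : ∫ φ in (δ k)..(c k), (a * powh (a - 1) (n+1) (γ φ) - ((n+1:ℕ):ℂ) * powh a (n + 1 + 1) (γ φ)) * γ' φ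
       = a * (∫ φ in (δ k)..(c k), powh (a - 1) (n+1) (γ φ) * γ' φ) - ((n+1:ℝ):ℂ) * ∫ φ in (δ k)..(c k), powh a (n+1+1) (γ φ) * γ' φ := by
      rw [← intervalIntegral.integral_const_mul, ← intervalIntegral.integral_const_mul, ← intervalIntegral.integral_sub
        ((P.intble (powh_cont _ _) k).const_mul _) ((P.intble (powh_cont _ _) k).const_mul _)]
      apply intervalIntegral.integral_congr
      intro φ _
      simp only
      push_cast; ring
    rw [e2, Complex.sub_im, Complex.im_ofReal_mul, Complex.im_ofReal_mul]
    field_simp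
    ring
end

noncomputable def Sf (a φ : ℝ) : ℝ := a * Real.sinc (a * φ)

lemma Sf_cont (a : ℝ) : Continuous (Sf a) := by
  unfold Sf
  exact continuous_const.mul (Real.continuous_sinc.comp (continuous_const.mul continuous_id))

lemma sin_eq_Sf (a φ : ℝ) : Real.sin (a * φ) = φ * Sf a φ := by
  unfold Sf
  by_cases h : a * φ = 0
  · rcases mul_eq_zero.1 h with h | h <;> simp [h]
  · rw [Real.sinc_of_ne_zero h]
    have := left_ne_zero_of_mul h
    have := right_ne_zero_of_mul h
    field_simp

lemma Sf_zero (a : ℝ) : Sf a 0 = a := by simp [Sf]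

lemma Sf_pos {a φ : ℝ} (ha : 0 < a) (hφ : 0 ≤ φ) (h : a * φ < Real.pi) : 0 < Sf a φ := by
  rcases hφ.eq_or_lt with h0 | h0
  · rw [← h0, Sf_zero]; exact ha
  · have h1 : 0 < Real.sin (a * φ) := Real.sin_pos_of_pos_of_lt_pi (by positivity) h
    rw [sin_eq_Sf] at h1
    exact (pos_iff_pos_of_mul_pos h1).1 h0

noncomputable def mf (p φ : ℝ) : ℝ := Sf 1 φ / Sf (p-1) φ
noncomputable def qf (p φ : ℝ) : ℝ := Sf p φ / Sf (p-1) φ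
noncomputable def rhof (p φ : ℝ) : ℝ := qf p φ ^ p / mf p φ
noncomputable def gf (p r φ : ℝ) : ℝ := (p-1) * Sf (p-1-r) φ / Sf (p-1) φ + Sf (r+1) φ / Sf 1 φ
noncomputable def gam (p φ : ℝ) : ℂ := (mf p φ : ℂ) * Complex.exp ((p * φ : ℝ) * Complex.I)
noncomputable def Af (p φ : ℝ) : ℝ := Real.cos φ / Real.sin φ - (p-1) * Real.cos ((p-1)*φ) / Real.sin ((p-1)*φ)
noncomputable def gam' (p φ : ℝ) : ℂ := gam p φ * ((Af p φ : ℂ) + p * Complex.I)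

section
variable {p : ℝ} (hp : 1 < p)
include hp

lemma S1_pos {φ : ℝ} (h0 : 0 ≤ φ) (h1 : φ ≤ Real.pi / p) : 0 < Sf 1 φ := by
  apply Sf_pos one_pos h0
  have : Real.pi / p < Real.pi := div_lt_self Real.pi_pos hp
  linarith

lemma Sp1_pos {φ : ℝ} (h0 : 0 ≤ φ) (h1 : φ ≤ Real.pi / p) : 0 < Sf (p-1) φ := by
  apply Sf_pos (by linarith) h0
  rw [le_div_iff₀ (by linarith)] at h1
  rcases h0.eq_or_lt with h | h
  · rw [← h]; simp [Real.pi_pos]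
  · nlinarith

lemma Sp_pos {φ : ℝ} (h0 : 0 ≤ φ) (h1 : φ < Real.pi / p) : 0 < Sf p φ := by
  apply Sf_pos (by linarith) h0
  rw [lt_div_iff₀ (by linarith)] at h1
  linarith

lemma Sp_end : Sf p (Real.pi / p) = 0 := by
  have h := sin_eq_Sf p (Real.pi / p)
  have h0 : p ≠ 0 := by linarith
  rw [mul_div_cancel₀ _ h0, Real.sin_pi] at h
  have := Real.pi_ne_zero
  have h2 : Real.pi / p ≠ 0 := by positivity
  rcases mul_eq_zero.1 h.symm with h | h
  · exact absurd h h2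
  · exact h

lemma m_pos {φ : ℝ} (h0 : 0 ≤ φ) (h1 : φ ≤ Real.pi / p) : 0 < mf p φ :=
  div_pos (S1_pos hp h0 h1) (Sp1_pos hp h0 h1)

lemma q_pos {φ : ℝ} (h0 : 0 ≤ φ) (h1 : φ < Real.pi / p) : 0 < qf p φ :=
  div_pos (Sp_pos hp h0 h1) (Sp1_pos hp h0 h1.le)

lemma m_contAt {φ : ℝ} (h0 : 0 ≤ φ) (h1 : φ ≤ Real.pi / p) : ContinuousAt (mf p) φ :=
  (Sf_cont _).continuousAt.div (Sf_cont _).continuousAt (Sp1_pos hp h0 h1).ne'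

lemma q_contAt {φ : ℝ} (h0 : 0 ≤ φ) (h1 : φ ≤ Real.pi / p) : ContinuousAt (qf p) φ :=
  (Sf_cont _).continuousAt.div (Sf_cont _).continuousAt (Sp1_pos hp h0 h1).ne'

lemma rho_contAt {φ : ℝ} (h0 : 0 ≤ φ) (h1 : φ ≤ Real.pi / p) : ContinuousAt (rhof p) φ :=
  ((q_contAt hp h0 h1).rpow_const (Or.inr (by linarith))).div (m_contAt hp h0 h1) (m_pos hp h0 h1).ne'

lemma g_contAt (r : ℝ) {φ : ℝ} (h0 : 0 ≤ φ) (h1 : φ ≤ Real.pi / p) : ContinuousAt (gf p r) φ :=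
  ((continuousAt_const.mul (Sf_cont _).continuousAt).div (Sf_cont _).continuousAt (Sp1_pos hp h0 h1).ne').add
    ((Sf_cont _).continuousAt.div (Sf_cont _).continuousAt (S1_pos hp h0 h1).ne')

lemma gam_contAt {φ : ℝ} (h0 : 0 ≤ φ) (h1 : φ ≤ Real.pi / p) : ContinuousAt (gam p) φ := by
  unfold gam
  apply ContinuousAt.mul
  · exact Complex.continuous_ofReal.continuousAt.comp (m_contAt hp h0 h1)
  · fun_prop

lemma sin1_pos {φ : ℝ} (h0 : 0 < φ) (h1 : φ < Real.pi / p) : 0 < Real.sin φ := by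
  have := sin_eq_Sf 1 φ
  rw [one_mul] at this
  rw [this]; exact mul_pos h0 (S1_pos hp h0.le h1.le)

lemma sinp1_pos {φ : ℝ} (h0 : 0 < φ) (h1 : φ < Real.pi / p) : 0 < Real.sin ((p-1) * φ) := by
  rw [sin_eq_Sf]; exact mul_pos h0 (Sp1_pos hp h0.le h1.le)

lemma m_eq {φ : ℝ} (h0 : φ ≠ 0) : mf p φ = Real.sin φ / Real.sin ((p-1)*φ) := by
  have := sin_eq_Sf 1 φ
  rw [one_mul] at this
  rw [this, sin_eq_Sf, mul_div_mul_left _ _ h0, mf]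

lemma gam_deriv {φ : ℝ} (h0 : 0 < φ) (h1 : φ < Real.pi / p) : HasDerivAt (gam p) (gam' p φ) φ := by
  have s1 := sin1_pos hp h0 h1
  have s2 := sinp1_pos hp h0 h1
  have e : gam p =ᶠ[𝓝 φ] fun φ => ((Real.sin φ / Real.sin ((p-1)*φ) : ℝ) : ℂ) * Complex.exp ((p * φ : ℝ) * Complex.I) := by
    filter_upwards [lt_mem_nhds h0] with x hx
    rw [gam, m_eq hp hx.ne']
  refine HasDerivAt.congr_of_eventuallyEq ?_ e
  have d1 : HasDerivAt (fun φ => Real.sin ((p-1)*φ)) (Real.cos ((p-1)*φ) * (p-1)) φ := by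
    have := ((hasDerivAt_id φ).const_mul (p-1)).sin
    simpa using this
  have d2 := ((Real.hasDerivAt_sin φ).div d1 s2.ne').ofReal_comp
  have d3 : HasDerivAt (fun φ : ℝ => Complex.exp ((p * φ : ℝ) * Complex.I)) (Complex.exp ((p * φ : ℝ) * Complex.I) * (p * Complex.I)) φ := by
    have h : HasDerivAt (fun φ : ℝ => ((p * φ : ℝ) : ℂ) * Complex.I) (p * Complex.I) φ := by
      have := (((hasDerivAt_id φ).const_mul p).ofReal_comp).mul_const Complex.I
      simpa using this
    exact h.cexp
  refine (d2.mul d3).congr_deriv ?_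
  rw [gam', gam, m_eq hp h0.ne', Af]
  simp only [Pi.div_apply]
  push_cast
  have t1 : Complex.sin (φ:ℂ) ≠ 0 := by rw [← Complex.ofReal_sin]; exact_mod_cast s1.ne'
  have t2 : Complex.sin ((p-1:ℂ) * (φ:ℂ)) ≠ 0 := by
    have : Complex.sin ((p-1:ℂ) * (φ:ℂ)) = ((Real.sin ((p-1)*φ) : ℝ) : ℂ) := by push_cast; rfl
    rw [this]; exact_mod_cast s2.ne'
  field_simp

lemma gam_im {φ : ℝ} (h0 : 0 < φ) (h1 : φ < Real.pi / p) : 0 < (gam p φ).im := by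
  rw [gam, Complex.im_ofReal_mul, Complex.exp_ofReal_mul_I_im]
  apply mul_pos (m_pos hp h0.le h1.le)
  rw [sin_eq_Sf]; exact mul_pos h0 (Sp_pos hp h0.le h1)

lemma gam_ne {φ : ℝ} (h0 : 0 < φ) (h1 : φ < Real.pi / p) : gam p φ ≠ 0 := by
  intro h
  have := gam_im hp h0 h1
  rw [h] at this; simp at this

lemma one_add_gam {φ : ℝ} (h0 : 0 < φ) (h1 : φ < Real.pi / p) :
    1 + gam p φ = (qf p φ : ℂ) * Complex.exp ((φ:ℝ) * Complex.I) := by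
  have s2 := sinp1_pos hp h0 h1
  have hq : qf p φ = Real.sin (p * φ) / Real.sin ((p-1)*φ) := by
    rw [sin_eq_Sf, sin_eq_Sf, mul_div_mul_left _ _ h0.ne', qf]
  have e : Real.sin ((p-1)*φ) = Real.sin (p*φ) * Real.cos φ - Real.cos (p*φ) * Real.sin φ := by
    rw [← Real.sin_sub]; congr 1; ring
  apply Complex.ext
  · rw [Complex.add_re, gam, Complex.re_ofReal_mul, Complex.exp_ofReal_mul_I_re, Complex.re_ofReal_mul, Complex.exp_ofReal_mul_I_re,
      hq, m_eq hp h0.ne', Complex.one_re]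
    field_simp
    linear_combination e
  · rw [Complex.add_im, gam, Complex.im_ofReal_mul, Complex.exp_ofReal_mul_I_im, Complex.im_ofReal_mul, Complex.exp_ofReal_mul_I_im,
      hq, m_eq hp h0.ne', Complex.one_im]
    field_simp
    ring

lemma A_contAt {φ : ℝ} (h0 : 0 < φ) (h1 : φ < Real.pi / p) : ContinuousAt (Af p) φ := by
  unfold Af
  have s1 := sin1_pos hp h0 h1
  have s2 := sinp1_pos hp h0 h1
  apply ContinuousAt.sub
  · exact Real.continuous_cos.continuousAt.div Real.continuous_sin.continuousAt s1.ne'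
  · exact ContinuousAt.div (by fun_prop) (by fun_prop) s2.ne'

noncomputable def dl (p : ℝ) (k : ℕ) : ℝ := Real.pi / p * (1 / ((k:ℝ) + 2))
noncomputable def cr (p : ℝ) (k : ℕ) : ℝ := Real.pi / p * (1 - 1 / ((k:ℝ) + 2))

omit hp in
lemma one_div_lim : Tendsto (fun k : ℕ => 1 / ((k:ℝ) + 2)) atTop (𝓝 0) := by
  have := (tendsto_one_div_add_atTop_nhds_zero_nat (𝕜 := ℝ)).comp (tendsto_add_atTop_nat 1)
  refine this.congr fun k => ?_
  simp; ring

lemma dl_bd (k : ℕ) : 0 < dl p k ∧ dl p k ≤ cr p k ∧ cr p k < Real.pi / p := by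
  have hL : 0 < Real.pi / p := div_pos Real.pi_pos (by linarith)
  have h1 : 0 < 1 / ((k:ℝ)+2) := by positivity
  have h2 : 1 / ((k:ℝ)+2) ≤ 1/2 := by
    apply one_div_le_one_div_of_le two_pos
    have : (0:ℝ) ≤ k := by positivity
    linarith
  unfold dl cr
  refine ⟨by positivity, ?_, ?_⟩
  · apply mul_le_mul_of_nonneg_left _ hL.le; linarith
  · nlinarith

omit hp in
lemma dl_lim : Tendsto (dl p) atTop (𝓝 0) := by
  have := one_div_lim.const_mul (Real.pi / p)
  rw [mul_zero] at this
  exact this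

omit hp in
lemma cr_lim : Tendsto (cr p) atTop (𝓝 (Real.pi / p)) := by
  have := (one_div_lim.const_sub 1).const_mul (Real.pi / p)
  rw [sub_zero, mul_one] at this
  exact this

lemma goodPath : GoodPath (gam p) (gam' p) (dl p) (cr p) (1/(p-1)) (-1) := by
  have hb := dl_bd hp
  have hL : 0 < Real.pi / p := div_pos Real.pi_pos (by linarith)
  have mem : ∀ k, ∀ φ ∈ Set.Icc (dl p k) (cr p k), 0 < φ ∧ φ < Real.pi / p := fun k φ hφ =>
    ⟨(hb k).1.trans_le hφ.1, hφ.2.trans_lt (hb k).2.2⟩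
  have hp1 : 0 < p - 1 := by linarith
  refine ⟨fun k => (hb k).2.1, ?_, ?_, ?_, ?_, ?_, le_rfl, by norm_num, ?_, ?_, ?_⟩
  · intro k φ hφ; exact gam_deriv hp (mem k φ hφ).1 (mem k φ hφ).2
  · intro k φ hφ
    obtain ⟨h0, h1⟩ := mem k φ hφ
    apply ContinuousAt.continuousWithinAt
    unfold gam'
    apply (gam_contAt hp h0.le h1.le).mul
    apply ContinuousAt.add _ continuousAt_const
    exact Complex.continuous_ofReal.continuousAt.comp (A_contAt hp h0 h1)
  · intro k φ hφ; exact gam_im hp (mem k φ hφ).1 (mem k φ hφ).2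
  · have : 0 < 1 / (p-1) := by positivity
    linarith
  · positivity
  · have h := (gam_contAt hp le_rfl hL.le).tendsto.comp (dl_lim (p := p))
    have e : gam p 0 = ((1/(p-1) : ℝ) : ℂ) := by simp [gam, mf, Sf_zero]
    rw [← e]
    exact h
  · have h := (gam_contAt hp hL.le le_rfl).tendsto.comp (cr_lim (p := p))
    have hp0 : p ≠ 0 := by linarith
    have e : mf p (Real.pi / p) = 1 := by
      rw [m_eq hp hL.ne', show (p-1) * (Real.pi / p) = Real.pi - Real.pi / p by field_simp, Real.sin_pi_sub, div_self]
      apply ne_of_gt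
      apply Real.sin_pos_of_pos_of_lt_pi hL (div_lt_self Real.pi_pos hp)
    have e2 : gam p (Real.pi / p) = ((-1 : ℝ) : ℂ) := by
      rw [gam, e, mul_div_cancel₀ _ hp0, Complex.exp_pi_mul_I]; simp
    rw [← e2]
    exact h
  · have e : ∀ k, (∫ φ in (dl p k)..(cr p k), (gam p φ)⁻¹ * gam' p φ).im = p * (cr p k - dl p k) := by
      intro k
      have h1 : ∫ φ in (dl p k)..(cr p k), (gam p φ)⁻¹ * gam' p φ = ∫ φ in (dl p k)..(cr p k), ((Af p φ : ℂ) + p * Complex.I) := by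
        apply intervalIntegral.integral_congr
        intro φ hφ
        rw [Set.uIcc_of_le (hb k).2.1] at hφ
        obtain ⟨h0, h1⟩ := mem k φ hφ
        simp only [gam']
        rw [inv_mul_cancel_left₀ (gam_ne hp h0 h1)]
      have hA : ContinuousOn (fun φ => (Af p φ : ℂ)) (Set.uIcc (dl p k) (cr p k)) := by
        rw [Set.uIcc_of_le (hb k).2.1]
        intro φ hφ
        obtain ⟨h0, h1⟩ := mem k φ hφ
        exact (Complex.continuous_ofReal.continuousAt.comp (A_contAt hp h0 h1)).continuousWithinAt
      rw [h1, intervalIntegral.integral_add hA.intervalIntegrable (by simp), intervalIntegral.integral_ofReal]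
      simp
    simp only [e]
    have := ((cr_lim (p := p)).sub (dl_lim (p := p))).const_mul p
    rw [sub_zero, mul_div_cancel₀ _ (by linarith)] at this
    exact this

lemma g_eq (r : ℝ) {φ : ℝ} (h0 : 0 < φ) (h1 : φ < Real.pi / p) :
    Af p φ * Real.sin (r * φ) + p * Real.cos (r * φ) = gf p r φ := by
  have s1 := sin1_pos hp h0 h1
  have s2 := sinp1_pos hp h0 h1
  have e : gf p r φ = (p-1) * Real.sin ((p-1-r)*φ) / Real.sin ((p-1)*φ) + Real.sin ((r+1)*φ) / Real.sin φ := by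
    have := sin_eq_Sf 1 φ
    rw [one_mul] at this
    rw [this, sin_eq_Sf, sin_eq_Sf, sin_eq_Sf, gf]
    have := Sp1_pos hp h0.le h1.le
    have := S1_pos hp h0.le h1.le
    field_simp
  rw [e, Af, show (p-1-r)*φ = (p-1)*φ - r * φ by ring, show (r+1)*φ = r * φ + φ by ring, Real.sin_sub, Real.sin_add]
  field_simp
  ring

lemma integrand_eq (r : ℝ) (n : ℕ) {φ : ℝ} (h0 : 0 < φ) (h1 : φ < Real.pi / p) :
    (powh (n * p + r) (n+1) (gam p φ) * gam' p φ).im = rhof p φ ^ n * (qf p φ ^ r * gf p r φ) := by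
  have hq := q_pos hp h0.le h1
  have hm := m_pos hp h0.le h1.le
  have hpi : φ < Real.pi := h1.trans (div_lt_self Real.pi_pos hp)
  have hγ := gam_ne hp h0 h1
  have e1 : (1 + gam p φ) ^ ((n * p + r : ℝ) : ℂ) = ((qf p φ ^ (n * p + r) : ℝ) : ℂ) * Complex.exp (((n * p + r) * φ : ℝ) * Complex.I) := by
    have hne : Complex.exp ((φ:ℝ) * Complex.I) ≠ 0 := Complex.exp_ne_zero _
    have hqc : (qf p φ : ℂ) ≠ 0 := by exact_mod_cast hq.ne'
    rw [one_add_gam hp h0 h1, Complex.cpow_def_of_ne_zero (mul_ne_zero hqc hne), Complex.log_ofReal_mul hq hne,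
      Complex.log_exp (by simp; linarith [Real.pi_pos]) (by simp; linarith), Real.rpow_def_of_pos hq, Complex.ofReal_exp,
      ← Complex.exp_add]
    congr 1
    push_cast
    ring
  have e2 : Complex.exp (((n * p + r) * φ : ℝ) * Complex.I) =
      Complex.exp ((p * φ : ℝ) * Complex.I) ^ n * Complex.exp ((r * φ : ℝ) * Complex.I) := by
    rw [← Complex.exp_nat_mul, ← Complex.exp_add]
    congr 1
    push_cast
    ring
  have e3 : qf p φ ^ (n * p + r) = (qf p φ ^ p) ^ n * qf p φ ^ r := by
    rw [Real.rpow_add hq, mul_comm (n:ℝ) p, Real.rpow_mul hq.le, Real.rpow_natCast]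
  have hmc : (mf p φ : ℂ) ≠ 0 := by exact_mod_cast hm.ne'
  have hne : Complex.exp ((p * φ : ℝ) * Complex.I) ≠ 0 := Complex.exp_ne_zero _
  have e4 : powh (n * p + r) (n+1) (gam p φ) * gam' p φ =
      ((rhof p φ ^ n * qf p φ ^ r : ℝ) : ℂ) * (Complex.exp ((r * φ : ℝ) * Complex.I) * ((Af p φ : ℂ) + (p : ℝ) * Complex.I)) := by
    have e5 : (gam p φ ^ (n+1))⁻¹ * gam p φ = (gam p φ ^ n)⁻¹ := by
      rw [pow_succ]; field_simp
    have e6 : powh (n * p + r) (n+1) (gam p φ) * gam' p φ = (1 + gam p φ) ^ ((n * p + r : ℝ) : ℂ) *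
        ((gam p φ ^ (n+1))⁻¹ * gam p φ) * ((Af p φ : ℂ) + p * Complex.I) := by
      unfold powh gam'; ring
    rw [e6, e5, e1, e2, e3, gam, rhof]
    push_cast
    push_cast at hne
    rw [mul_pow, div_pow]
    field_simp
  rw [e4, Complex.im_ofReal_mul, ← g_eq hp r h0 h1, Complex.mul_im, Complex.exp_ofReal_mul_I_re, Complex.exp_ofReal_mul_I_im]
  simp
  ring

lemma rep (r : ℝ) (n : ℕ) (h : -1 < n * (p - 1) + r) :
    Tendsto (fun k => ∫ φ in (dl p k)..(cr p k), rhof p φ ^ n * (qf p φ ^ r * gf p r φ)) atTop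
      (𝓝 (Real.pi * gbinom (n * p + r) n)) := by
  have P := goodPath hp
  have h1 := P.T n (n * p + r) (by linarith)
  refine h1.congr fun k => ?_
  have h2 := Complex.imCLM.intervalIntegral_comp_comm (P.intble (powh_cont (n * p + r) (n+1)) k)
  simp only [Complex.imCLM_apply] at h2
  rw [← h2]
  apply intervalIntegral.integral_congr
  intro φ hφ
  have hb := dl_bd hp k
  rw [Set.uIcc_of_le hb.2.1] at hφ
  exact integrand_eq hp r n (hb.1.trans_le hφ.1) (hφ.2.trans_lt hb.2.2)
end

lemma quad_int {a b : ℝ} (hab : a ≤ b) {ρ W : ℝ → ℝ} (hρ : ContinuousOn ρ (Set.Icc a b))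
    (hW : ContinuousOn W (Set.Icc a b)) (N : ℕ) (α : ℕ → ℝ) :
    ∑ i ∈ Finset.range N, ∑ j ∈ Finset.range N, (∫ φ in a..b, ρ φ ^ (i+j) * W φ) * α i * α j =
      ∫ φ in a..b, (∑ i ∈ Finset.range N, α i * ρ φ ^ i) ^ 2 * W φ := by
  have hint : ∀ n, IntervalIntegrable (fun φ => ρ φ ^ n * W φ) volume a b := by
    intro n
    apply ContinuousOn.intervalIntegrable
    rw [Set.uIcc_of_le hab]
    exact (hρ.pow n).mul hW
  have e : ∀ φ, (∑ i ∈ Finset.range N, α i * ρ φ ^ i) ^ 2 * W φ =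
      ∑ i ∈ Finset.range N, ∑ j ∈ Finset.range N, (ρ φ ^ (i+j) * W φ) * (α i * α j) := by
    intro φ
    rw [sq, Finset.sum_mul_sum, Finset.sum_mul]
    apply Finset.sum_congr rfl; intro i _
    rw [Finset.sum_mul]
    apply Finset.sum_congr rfl; intro j _
    ring
  simp only [e]
  rw [intervalIntegral.integral_finsetSum]
  · apply Finset.sum_congr rfl; intro i _
    rw [intervalIntegral.integral_finsetSum]
    · apply Finset.sum_congr rfl; intro j _
      rw [intervalIntegral.integral_mul_const]; ring
    · intro j _; exact (hint _).mul_const _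
  · intro i _
    apply ContinuousOn.intervalIntegrable
    rw [Set.uIcc_of_le hab]
    exact continuousOn_finsetSum _ (fun j _ => ((hρ.pow _).mul hW).mul continuousOn_const)

lemma gbinom_cont (n : ℕ) : Continuous (fun a => gbinom a n) := by
  unfold gbinom
  fun_prop

lemma suff_open {p r : ℝ} (hp : 1 < p) (h1 : -1 < r) (h2 : r < p - 1) :
    IsPosDefSeq (fun n : ℕ => gbinom ((n : ℝ) * p + r) n) := by
  intro m α
  have hlim : Tendsto (fun k => ∑ i ∈ Finset.range (m+1), ∑ j ∈ Finset.range (m+1),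
      (∫ φ in (dl p k)..(cr p k), rhof p φ ^ (i+j) * (qf p φ ^ r * gf p r φ)) * α i * α j) atTop
      (𝓝 (∑ i ∈ Finset.range (m+1), ∑ j ∈ Finset.range (m+1), (Real.pi * gbinom (((i+j : ℕ):ℝ) * p + r) (i+j)) * α i * α j)) := by
    apply tendsto_finsetSum; intro i _
    apply tendsto_finsetSum; intro j _
    apply Tendsto.mul_const
    apply Tendsto.mul_const
    apply rep hp
    have : (0:ℝ) ≤ ((i+j:ℕ):ℝ) := by positivity
    nlinarith
  have hnn : 0 ≤ ∑ i ∈ Finset.range (m+1), ∑ j ∈ Finset.range (m+1), (Real.pi * gbinom (((i+j : ℕ):ℝ) * p + r) (i+j)) * α i * α j := by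
    refine ge_of_tendsto' hlim fun k => ?_
    have hb := dl_bd hp k
    have mem : ∀ φ ∈ Set.Icc (dl p k) (cr p k), 0 < φ ∧ φ < Real.pi / p := fun φ hφ =>
      ⟨hb.1.trans_le hφ.1, hφ.2.trans_lt hb.2.2⟩
    rw [quad_int hb.2.1]
    · apply intervalIntegral.integral_nonneg hb.2.1
      intro φ hφ
      obtain ⟨h0, h3⟩ := mem φ hφ
      apply mul_nonneg (sq_nonneg _)
      apply mul_nonneg (Real.rpow_nonneg (q_pos hp h0.le h3).le _)
      have hpφ : p * φ < Real.pi := by rw [lt_div_iff₀ (by linarith)] at h3; linarith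
      have a1 : 0 < Sf (p-1-r) φ := Sf_pos (by linarith) h0.le (by nlinarith)
      have a2 : 0 < Sf (r+1) φ := Sf_pos (by linarith) h0.le (by nlinarith)
      have a3 := S1_pos hp h0.le h3.le
      have a4 := Sp1_pos hp h0.le h3.le
      have a5 : 0 < p - 1 := by linarith
      unfold gf
      positivity
    · intro φ hφ
      obtain ⟨h0, h3⟩ := mem φ hφ
      exact (rho_contAt hp h0.le h3.le).continuousWithinAt
    · intro φ hφ
      obtain ⟨h0, h3⟩ := mem φ hφ
      exact (((q_contAt hp h0.le h3.le).rpow_const (Or.inl (q_pos hp h0.le h3).ne')).mul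
        (g_contAt hp r h0.le h3.le)).continuousWithinAt
  have e : ∑ i ∈ Finset.range (m+1), ∑ j ∈ Finset.range (m+1), (Real.pi * gbinom (((i+j : ℕ):ℝ) * p + r) (i+j)) * α i * α j
    = Real.pi * ∑ i ∈ Finset.range (m+1), ∑ j ∈ Finset.range (m+1), gbinom (((i+j : ℕ):ℝ) * p + r) (i+j) * α i * α j := by
    rw [Finset.mul_sum]
    apply Finset.sum_congr rfl; intro i _
    rw [Finset.mul_sum]
    apply Finset.sum_congr rfl; intro j _
    ring
  rw [e] at hnn
  exact nonneg_of_mul_nonneg_right hnn Real.pi_pos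

lemma suff {p r : ℝ} (hp : 1 ≤ p) (h1 : -1 ≤ r) (h2 : r ≤ p - 1) :
    IsPosDefSeq (fun n : ℕ => gbinom ((n : ℝ) * p + r) n) := by
  intro m α
  have hpos : ∀ k : ℕ, (0:ℝ) < 1 / ((k:ℝ) + 2) := fun k => by positivity
  have hlim : Tendsto (fun k : ℕ => ∑ i ∈ Finset.range (m+1), ∑ j ∈ Finset.range (m+1),
      gbinom (((i+j : ℕ):ℝ) * (p + 1 / ((k:ℝ) + 2)) + (r + (1 / ((k:ℝ) + 2)) / 2)) (i+j) * α i * α j) atTop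
      (𝓝 (∑ i ∈ Finset.range (m+1), ∑ j ∈ Finset.range (m+1), gbinom (((i+j : ℕ):ℝ) * (p + 0) + (r + 0 / 2)) (i+j) * α i * α j)) := by
    apply tendsto_finsetSum; intro i _
    apply tendsto_finsetSum; intro j _
    apply Tendsto.mul_const
    apply Tendsto.mul_const
    refine ((gbinom_cont (i+j)).tendsto _).comp ?_
    exact ((one_div_lim.const_add p).const_mul _).add ((one_div_lim.div_const 2).const_add r)
  simp only [add_zero, zero_div] at hlim
  refine ge_of_tendsto' hlim fun k => ?_
  have := hpos k
  exact suff_open (p := p + 1 / ((k:ℝ) + 2)) (r := r + (1 / ((k:ℝ) + 2)) / 2) (by linarith) (by linarith) (by linarith) m α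

lemma laplace {L φ0 : ℝ} {ρ D : ℝ → ℝ} (h0 : 0 < φ0) (h1 : φ0 < L) (hρ : ContinuousOn ρ (Set.Icc 0 L))
    (hD : ContinuousOn D (Set.Icc 0 L)) (hpos : ∀ φ ∈ Set.Icc 0 φ0, 0 < ρ φ) (hnn : ∀ φ ∈ Set.Icc 0 L, 0 ≤ ρ φ)
    (hL : ρ L = 0)
    (hneg : ∀ φ ∈ Set.Ico φ0 L, D φ < 0) :
    ∃ R : ℝ, ∃ N : ℕ, ∫ φ in (0:ℝ)..L, ((1 - ρ φ / R) ^ N) ^ 2 * D φ < 0 := by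
  have hL0 : 0 < L := h0.trans h1
  have s0 : Set.Icc 0 φ0 ⊆ Set.Icc 0 L := Set.Icc_subset_Icc_right h1.le
  obtain ⟨xm, hxm, hm⟩ := isCompact_Icc.exists_isMinOn (Set.nonempty_Icc.2 h0.le) (hρ.mono s0)
  obtain ⟨xM, hxM, hM⟩ := isCompact_Icc.exists_isMaxOn (Set.nonempty_Icc.2 hL0.le) hρ
  obtain ⟨C, hC⟩ := isCompact_Icc.exists_bound_of_continuousOn hD
  set m := ρ xm with hmdef
  set R := ρ xM with hRdef
  have hmpos : 0 < m := hpos _ hxm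
  have hmR : m ≤ R := hM (s0 hxm)
  have hRpos : 0 < R := hmpos.trans_le hmR
  have hm' : ∀ φ ∈ Set.Icc 0 φ0, m ≤ ρ φ := fun φ hφ => hm hφ
  have hM' : ∀ φ ∈ Set.Icc 0 L, ρ φ ≤ R := fun φ hφ => hM hφ
  -- choose φ1
  have hev : ∀ᶠ φ in 𝓝[<] L, ρ φ < m / 2 := by
    have h := (hρ L ⟨hL0.le, le_rfl⟩)
    have h' : Tendsto ρ (𝓝[<] L) (𝓝 (ρ L)) := by
      apply h.tendsto.mono_left
      rw [← nhdsWithin_Ioo_eq_nhdsLT hL0]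
      exact nhdsWithin_mono _ Set.Ioo_subset_Icc_self
    rw [hL] at h'
    exact h'.eventually_lt_const (by positivity)
  rw [eventually_iff, mem_nhdsLT_iff_exists_Ioo_subset' h1] at hev
  obtain ⟨l, hl, hsub⟩ := hev
  obtain ⟨φ1, hφ1, hφ1L⟩ := exists_between (max_lt hl h1 : max l φ0 < L)
  have hlφ1 : l < φ1 := (le_max_left _ _).trans_lt hφ1
  have h0φ1 : φ0 < φ1 := (le_max_right _ _).trans_lt hφ1
  have hsmall : ∀ φ ∈ Set.Icc φ1 L, ρ φ ≤ m / 2 := by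
    intro φ hφ
    rcases hφ.2.eq_or_lt with h | h
    · rw [h, hL]; positivity
    · exact (hsub ⟨hlφ1.trans_le hφ.1, h⟩ : ρ φ < m/2).le
  have s1 : Set.Icc φ1 L ⊆ Set.Icc 0 L := Set.Icc_subset_Icc_left (by linarith)
  have s2 : Set.Icc φ0 φ1 ⊆ Set.Icc 0 L := Set.Icc_subset_Icc h0.le hφ1L.le
  -- κ
  have hκ : ∫ φ in φ1..L, D φ < 0 := by
    have h := intervalIntegral.intervalIntegral_pos_of_pos_on (f := fun φ => - D φ) (a := φ1) (b := L)
      (by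
        apply ContinuousOn.intervalIntegrable
        rw [Set.uIcc_of_le hφ1L.le]
        exact (hD.mono s1).neg)
      (fun φ hφ => by have := hneg φ ⟨by linarith [hφ.1], hφ.2⟩; linarith) hφ1L
    rw [intervalIntegral.integral_neg] at h
    linarith
  set κ := - ∫ φ in φ1..L, D φ with hκdef
  have hκpos : 0 < κ := by linarith
  have hC0 : 0 ≤ C := (norm_nonneg _).trans (hC 0 ⟨le_rfl, hL0.le⟩)
  set x := (1 - m / R) ^ 2 with hx
  set y := (1 - m / 2 / R) ^ 2 with hy
  have hmR1 : m / R ≤ 1 := by rw [div_le_one hRpos]; exact hmR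
  have hmRp : 0 < m / R := by positivity
  have e2 : m / 2 / R = m / R / 2 := by ring
  have hxy : x < y := by rw [hx, hy, e2]; nlinarith
  have hx0 : 0 ≤ x := sq_nonneg _
  have hy0 : 0 < y := hx0.trans_lt hxy
  obtain ⟨N, hN⟩ := exists_pow_lt_of_lt_one (show 0 < κ / (C * φ0 + 1) by positivity) ((div_lt_one hy0).2 hxy)
  refine ⟨R, N, ?_⟩
  have hN' : C * φ0 * x ^ N < κ * y ^ N := by
    rw [div_pow, div_lt_div_iff₀ (by positivity) (by positivity)] at hN
    have : 0 ≤ x ^ N := by positivity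
    nlinarith
  have hF : ContinuousOn (fun φ => ((1 - ρ φ / R) ^ N) ^ 2 * D φ) (Set.Icc 0 L) :=
    (((continuousOn_const.sub (hρ.div_const R)).pow N).pow 2).mul hD
  have ii : ∀ a b, a ≤ b → Set.Icc a b ⊆ Set.Icc 0 L → IntervalIntegrable (fun φ => ((1 - ρ φ / R) ^ N) ^ 2 * D φ) volume a b := by
    intro a b hab hs
    apply ContinuousOn.intervalIntegrable
    rw [Set.uIcc_of_le hab]
    exact hF.mono hs
  have i0 := ii 0 φ0 h0.le s0
  have i1 := ii φ0 φ1 h0φ1.le s2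
  have i2 := ii φ1 L hφ1L.le s1
  rw [← intervalIntegral.integral_add_adjacent_intervals (i0.trans i1) i2,
    ← intervalIntegral.integral_add_adjacent_intervals i0 i1]
  have hpow : ∀ u : ℝ, (u ^ N) ^ 2 = (u ^ 2) ^ N := fun u => by rw [← pow_mul, ← pow_mul, mul_comm]
  have b0 : ∫ φ in (0:ℝ)..φ0, ((1 - ρ φ / R) ^ N) ^ 2 * D φ ≤ C * φ0 * x ^ N := by
    have : ∫ φ in (0:ℝ)..φ0, ((1 - ρ φ / R) ^ N) ^ 2 * D φ ≤ ∫ φ in (0:ℝ)..φ0, x ^ N * C := by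
      apply intervalIntegral.integral_mono_on h0.le i0 (by simp)
      intro φ hφ
      have hd : D φ ≤ C := (le_abs_self _).trans (hC φ (s0 hφ))
      have hr : (1 - ρ φ / R) ^ 2 ≤ x := by
        rw [hx]
        apply pow_le_pow_left₀
        · rw [sub_nonneg, div_le_one hRpos]; exact hM' φ (s0 hφ)
        · have := hm' φ hφ
          gcongr
      rw [hpow]
      calc ((1 - ρ φ / R) ^ 2) ^ N * D φ ≤ ((1 - ρ φ / R) ^ 2) ^ N * C := by gcongr
        _ ≤ x ^ N * C := by gcongr
    refine this.trans_eq ?_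
    simp; ring
  have b1 : ∫ φ in φ0..φ1, ((1 - ρ φ / R) ^ N) ^ 2 * D φ ≤ 0 := by
    have := intervalIntegral.integral_nonneg (f := fun φ => -(((1 - ρ φ / R) ^ N) ^ 2 * D φ))
      (μ := volume) h0φ1.le (fun φ hφ => neg_nonneg.2 (mul_nonpos_of_nonneg_of_nonpos (sq_nonneg _)
        (hneg φ ⟨hφ.1, by linarith [hφ.2]⟩).le))
    rw [intervalIntegral.integral_neg] at this
    linarith
  have b2 : ∫ φ in φ1..L, ((1 - ρ φ / R) ^ N) ^ 2 * D φ ≤ y ^ N * ∫ φ in φ1..L, D φ := by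
    rw [← intervalIntegral.integral_const_mul]
    apply intervalIntegral.integral_mono_on hφ1L.le i2
    · apply ContinuousOn.intervalIntegrable
      rw [Set.uIcc_of_le hφ1L.le]
      exact continuousOn_const.mul (hD.mono s1)
    · intro φ hφ
      have hd : D φ ≤ 0 := by
        rcases hφ.2.eq_or_lt with h | h
        · -- continuity at the endpoint
          have hlim : Tendsto D (𝓝[<] L) (𝓝 (D L)) := by
            apply (hD L ⟨hL0.le, le_rfl⟩).tendsto.mono_left
            rw [← nhdsWithin_Ioo_eq_nhdsLT hL0]
            exact nhdsWithin_mono _ Set.Ioo_subset_Icc_self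
          rw [h]
          refine le_of_tendsto hlim ?_
          filter_upwards [Ioo_mem_nhdsLT h1] with t ht
          exact (hneg t ⟨ht.1.le, ht.2⟩).le
        · exact (hneg φ ⟨by linarith [hφ.1], h⟩).le
      have hr : y ≤ (1 - ρ φ / R) ^ 2 := by
        rw [hy]
        apply pow_le_pow_left₀
        · rw [e2]; linarith
        · have := hsmall φ hφ
          gcongr
      rw [hpow]
      apply mul_le_mul_of_nonpos_right _ hd
      gcongr
  have : y ^ N * ∫ φ in φ1..L, D φ = - (κ * y ^ N) := by rw [hκdef]; ring
  linarith

lemma nec_core {p r : ℝ} (hp : 1 < p) (hs : Real.sin ((r + 1) * (Real.pi / p)) < 0) :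
    ¬ IsPosDefSeq (fun n : ℕ => gbinom ((n : ℝ) * p + r) n) := by
  intro h
  have hL : 0 < Real.pi / p := div_pos Real.pi_pos (by linarith)
  have hp0 : p ≠ 0 := by linarith
  set L := Real.pi / p with hLdef
  obtain ⟨k, hk⟩ := exists_nat_gt (-r / (2 * (p-1)))
  have hk' : 0 < 2 * k * (p-1) + r := by
    rw [div_lt_iff₀ (by linarith)] at hk; linarith
  have hkp : 0 ≤ 2 * k * p + r := by
    have : (0:ℝ) ≤ k := by positivity
    nlinarith
  obtain ⟨D, hDdef⟩ : ∃ D : ℝ → ℝ, D = fun φ => qf p φ ^ (2 * k * p + r) / mf p φ ^ (2 * k) * gf p r φ := ⟨_, rfl⟩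
  have hDc : ContinuousOn D (Set.Icc 0 L) := by
    intro φ hφ
    rw [hDdef]
    exact ((((q_contAt hp hφ.1 hφ.2).rpow_const (Or.inr hkp)).div ((m_contAt hp hφ.1 hφ.2).pow _)
      (pow_ne_zero _ (m_pos hp hφ.1 hφ.2).ne')).mul (g_contAt hp r hφ.1 hφ.2)).continuousWithinAt
  have hρc : ContinuousOn (rhof p) (Set.Icc 0 L) := fun φ hφ => (rho_contAt hp hφ.1 hφ.2).continuousWithinAt
  have hDeq : ∀ φ, 0 ≤ φ → φ < L → D φ = rhof p φ ^ (2*k) * (qf p φ ^ r * gf p r φ) := by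
    intro φ h0 h1
    have hq := q_pos hp h0 h1
    rw [hDdef, rhof, div_pow, ← Real.rpow_natCast (qf p φ ^ p), ← Real.rpow_mul hq.le]
    simp only
    rw [show (2 * k * p + r) = p * ((2 * k : ℕ):ℝ) + r by push_cast; ring, Real.rpow_add hq]
    ring
  have hrep : ∀ n : ℕ, ∫ φ in (0:ℝ)..L, rhof p φ ^ n * D φ = Real.pi * gbinom (((n + 2 * k : ℕ):ℝ) * p + r) (n + 2 * k) := by
    intro n
    have hFc : ContinuousOn (fun φ => rhof p φ ^ n * D φ) (Set.Icc 0 L) := (hρc.pow n).mul hDc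
    have h1 := rep hp r (n + 2 * k) (by
      push_cast
      have : (0:ℝ) ≤ n := by positivity
      nlinarith)
    have hI : IntegrableOn (fun φ => rhof p φ ^ n * D φ) (Set.uIcc 0 L) volume := by
      rw [Set.uIcc_of_le hL.le]; exact hFc.integrableOn_Icc
    have hprim := intervalIntegral.continuousOn_primitive_interval hI
    rw [Set.uIcc_of_le hL.le] at hprim
    have memd : ∀ j, dl p j ∈ Set.Icc 0 L := fun j =>
      ⟨(dl_bd hp j).1.le, ((dl_bd hp j).2.1.trans (dl_bd hp j).2.2.le)⟩
    have memc : ∀ j, cr p j ∈ Set.Icc 0 L := fun j =>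
      ⟨((dl_bd hp j).1.le.trans (dl_bd hp j).2.1), (dl_bd hp j).2.2.le⟩
    have t1 := (hprim 0 ⟨le_rfl, hL.le⟩).tendsto.comp
      (tendsto_nhdsWithin_iff.2 ⟨dl_lim (p := p), Eventually.of_forall memd⟩)
    have t2 := (hprim L ⟨hL.le, le_rfl⟩).tendsto.comp
      (tendsto_nhdsWithin_iff.2 ⟨cr_lim (p := p), Eventually.of_forall memc⟩)
    have t3 := t2.sub t1
    rw [intervalIntegral.integral_same, sub_zero] at t3
    refine tendsto_nhds_unique t3 (h1.congr fun j => ?_)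
    simp only [Function.comp]
    have hii : ∀ a b, a ∈ Set.Icc 0 L → b ∈ Set.Icc 0 L → IntervalIntegrable (fun φ => rhof p φ ^ n * D φ) volume a b := by
      intro a b ha hb
      apply ContinuousOn.intervalIntegrable
      exact hFc.mono (Set.uIcc_subset_Icc ha hb)
    rw [intervalIntegral.integral_interval_sub_left (hii _ _ ⟨le_rfl, hL.le⟩ (memc j)) (hii _ _ ⟨le_rfl, hL.le⟩ (memd j))]
    apply intervalIntegral.integral_congr
    intro φ hφ
    have hb := dl_bd hp j
    rw [Set.uIcc_of_le hb.2.1] at hφ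
    simp only
    rw [hDeq φ (hb.1.le.trans hφ.1) (hφ.2.trans_lt hb.2.2), pow_add]
    ring
  -- sign near the end
  have hg : gf p r L < 0 := by
    have e1 := sin_eq_Sf (p-1-r) L
    have e2 := sin_eq_Sf (p-1) L
    have e3 := sin_eq_Sf (r+1) L
    have hpL : p * L = Real.pi := by rw [hLdef]; field_simp
    rw [show (p-1-r) * L = Real.pi - (r+1) * L by rw [← hpL]; ring, Real.sin_pi_sub, e3] at e1
    have e4 := sin_eq_Sf 1 L
    rw [show (p-1) * L = Real.pi - 1 * L by rw [← hpL]; ring, Real.sin_pi_sub, e4] at e2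
    have e1' := mul_left_cancel₀ hL.ne' e1
    have e2' := mul_left_cancel₀ hL.ne' e2
    rw [e3] at hs
    have hs' : Sf (r+1) L < 0 := by
      by_contra hc
      push Not at hc
      have := mul_nonneg hL.le hc
      linarith
    have h1 := S1_pos hp hL.le le_rfl
    rw [gf, ← e1', ← e2', ← add_div]
    apply div_neg_of_neg_of_pos _ h1
    nlinarith
  have hev : ∀ᶠ φ in 𝓝 L, gf p r φ < 0 := (g_contAt hp r hL.le le_rfl).eventually_lt_const hg
  obtain ⟨l, hl, hsub⟩ := (mem_nhdsLT_iff_exists_Ioo_subset' hL).1 (nhdsWithin_le_nhds hev : _ ∈ 𝓝[<] L)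
  obtain ⟨φ0, hφ0, hφ0L⟩ := exists_between (max_lt hl hL : max l 0 < L)
  have hl0 : l < φ0 := (le_max_left _ _).trans_lt hφ0
  have h00 : 0 < φ0 := (le_max_right _ _).trans_lt hφ0
  have hρpos : ∀ φ, 0 ≤ φ → φ < L → 0 < rhof p φ := fun φ h0 h1 =>
    div_pos (Real.rpow_pos_of_pos (q_pos hp h0 h1) _) (m_pos hp h0 h1.le)
  have hρL : rhof p L = 0 := by
    rw [rhof, qf, Sp_end hp, zero_div, Real.zero_rpow hp0, zero_div]
  obtain ⟨R, N, hRN⟩ := laplace h00 hφ0L hρc hDc (fun φ hφ => hρpos φ hφ.1 (hφ.2.trans_lt hφ0L))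
    (fun φ hφ => by
      rcases hφ.2.eq_or_lt with h | h
      · rw [h, hρL]
      · exact (hρpos φ hφ.1 h).le) hρL
    (fun φ hφ => by
      have hφpos : 0 ≤ φ := h00.le.trans hφ.1
      rw [hDdef]
      have hq := q_pos hp hφpos hφ.2
      have hm := m_pos hp hφpos hφ.2.le
      have hgn : gf p r φ < 0 := hsub ⟨hl0.trans_le hφ.1, hφ.2⟩
      exact mul_neg_of_pos_of_neg (by positivity) hgn)
  -- polynomial
  let Q : Polynomial ℝ := (1 - Polynomial.C (1/R) * Polynomial.X) ^ N
  have hQdeg : Q.natDegree < N + 1 := by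
    have h1 : (1 - Polynomial.C (1/R) * Polynomial.X : Polynomial ℝ).natDegree ≤ 1 := by compute_degree
    have := Polynomial.natDegree_pow_le_of_le N h1
    show ((1 - Polynomial.C (1/R) * Polynomial.X : Polynomial ℝ) ^ N).natDegree < N + 1
    omega
  have hQ : ∀ x : ℝ, ∑ i ∈ Finset.range (N+1), Q.coeff i * x ^ i = (1 - x / R) ^ N := by
    intro x
    rw [← Polynomial.eval_eq_sum_range' hQdeg x]
    simp only [Q, Polynomial.eval_pow, Polynomial.eval_sub, Polynomial.eval_one, Polynomial.eval_mul, Polynomial.eval_C, Polynomial.eval_X]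
    congr 1; ring
  have hpd := posdef_shift h k N (fun i => Q.coeff i)
  have hquad := quad_int hL.le hρc hDc (N+1) (fun i => Q.coeff i)
  simp only [hrep, hQ] at hquad
  rw [← hquad] at hRN
  have e : ∑ i ∈ Finset.range (N+1), ∑ j ∈ Finset.range (N+1), (Real.pi * gbinom (((i+j+2*k : ℕ):ℝ) * p + r) (i+j+2*k)) * Q.coeff i * Q.coeff j
    = Real.pi * ∑ i ∈ Finset.range (N+1), ∑ j ∈ Finset.range (N+1), gbinom (((i+j+2*k : ℕ):ℝ) * p + r) (i+j+2*k) * Q.coeff i * Q.coeff j := by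
    rw [Finset.mul_sum]
    apply Finset.sum_congr rfl; intro i _
    rw [Finset.mul_sum]
    apply Finset.sum_congr rfl; intro j _
    ring
  rw [e] at hRN
  have := mul_nonneg Real.pi_pos.le hpd
  linarith

lemma nec {p r : ℝ} (hp : 1 ≤ p) (h : IsPosDefSeq (fun n : ℕ => gbinom ((n : ℝ) * p + r) n)) :
    -1 ≤ r ∧ r ≤ p - 1 := by
  have hq := posdef_quad h
  rcases hp.eq_or_lt with h1 | h1
  · subst h1
    constructor <;> nlinarith
  have hp0 : 0 < p := by linarith
  have hL : 0 < Real.pi / p := div_pos Real.pi_pos hp0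
  have hpL : p * (Real.pi / p) = Real.pi := by field_simp
  constructor
  · by_contra hc
    push Not at hc
    rcases le_or_gt r (-1 - p) with h2 | h2
    · exact not_posdef_far h1 h2 h
    · refine nec_core h1 ?_ h
      apply Real.sin_neg_of_neg_of_neg_pi_lt
      · nlinarith
      · nlinarith
  · by_contra hc
    push Not at hc
    have h2 : r < 2 * p - 1 := by nlinarith
    refine nec_core h1 ?_ h
    rw [← Real.sin_sub_two_pi]
    apply Real.sin_neg_of_neg_of_neg_pi_lt
    · nlinarith
    · nlinarith

theorem binomial_posdef_iff (p r : ℝ) :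
    IsPosDefSeq (fun n : ℕ => gbinom ((n : ℝ) * p + r) n) ↔
      (1 ≤ p ∧ -1 ≤ r ∧ r ≤ p - 1) ∨ (p ≤ 0 ∧ p - 1 ≤ r ∧ r ≤ 0) := by
  constructor
  · intro h
    rcases le_or_gt 1 p with h1 | h1
    · exact Or.inl ⟨h1, nec h1 h⟩
    · rcases le_or_gt p 0 with h0 | h0
      · obtain ⟨a, b⟩ := nec (by linarith) (posdef_dual h)
        exact Or.inr ⟨h0, by linarith, by linarith⟩
      · exact absurd h (not_posdef_unit h0 h1)
  · rintro (⟨h1, h2, h3⟩ | ⟨h1, h2, h3⟩)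
    · exact suff h1 h2 h3
    · have := posdef_dual (suff (p := 1 - p) (r := -1 - r) (by linarith) (by linarith) (by linarith))
      simpa using this
end

section
/- Let p, r be real numbers and define the Raney sequence (R_n)_{n≥0} by R_0 := 1 and R_n := (r/n) · C(np + r − 1, n − 1) for n ≥ 1 (which equals C(np+r, n) · r/(np+r) whenever np + r ≠ 0). The sequence (R_n) is positive definite if and only if either (p ≥ 1 and 0 ≤ r ≤ p) or (p ≤ 0 and p − 1 ≤ r ≤ 0) or r = 0. -/
/-- The Raney sequence `R_0 = 1`, `R_n = (r/n)·C(np+r-1, n-1)` for `n ≥ 1`. -/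
noncomputable def raney (p r : ℝ) (n : ℕ) : ℝ :=
  if n = 0 then 1 else r / n * gbinom ((n : ℝ) * p + r - 1) (n - 1)

open Polynomial Filter Topology

/-- moment functional -/
noncomputable def LF (s : ℕ → ℝ) : ℝ[X] →ₗ[ℝ] ℝ :=
  Polynomial.lsum (fun n => (s n) • (LinearMap.id : ℝ →ₗ[ℝ] ℝ))

lemma LF_eq (s : ℕ → ℝ) (P : ℝ[X]) : LF s P = ∑ n ∈ P.support, s n * P.coeff n := by
  simp [LF, Polynomial.lsum_apply, Polynomial.sum_def]

lemma LF_mon (s : ℕ → ℝ) (n : ℕ) (a : ℝ) : LF s (C a * X ^ n) = a * s n := by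
  rw [Polynomial.C_mul_X_pow_eq_monomial]
  simp [LF, Polynomial.lsum_apply, mul_comm]

lemma LF_one (s : ℕ → ℝ) : LF s 1 = s 0 := by
  have := LF_mon s 0 1
  simpa using this

lemma LF_sq (s : ℕ → ℝ) (m : ℕ) (α : ℕ → ℝ) :
    LF s ((∑ i ∈ Finset.range (m + 1), C (α i) * X ^ i) ^ 2) =
     ∑ i ∈ Finset.range (m + 1), ∑ j ∈ Finset.range (m + 1), s (i + j) * α i * α j := by
  rw [sq, Finset.sum_mul_sum, map_sum]
  refine Finset.sum_congr rfl fun i _ => ?_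
  rw [map_sum]
  refine Finset.sum_congr rfl fun j _ => ?_
  have : (C (α i) * X ^ i * (C (α j) * X ^ j) : ℝ[X]) = C (α i * α j) * X ^ (i + j) := by
    rw [C_mul, pow_add]; ring
  rw [this, LF_mon]; ring

lemma posdef_LF {s : ℕ → ℝ} (h : IsPosDefSeq s) (P : ℝ[X]) : 0 ≤ LF s (P ^ 2) := by
  have := h P.natDegree P.coeff
  rw [← LF_sq, ← P.as_sum_range_C_mul_X_pow] at this
  exact this

/-- positivity on [0,c] -/
def PosOn (c : ℝ) (s : ℕ → ℝ) : Prop :=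
  ∀ P : ℝ[X], (∀ x, 0 ≤ x → x ≤ c → 0 ≤ P.eval x) → 0 ≤ LF s P

lemma PosOn.posdef {c : ℝ} {s : ℕ → ℝ} (h : PosOn c s) : IsPosDefSeq s := by
  intro m α
  rw [← LF_sq]
  apply h
  intro x _ _
  rw [eval_pow]; positivity

lemma LF_add (s t : ℕ → ℝ) (P : ℝ[X]) : LF (fun n => s n + t n) P = LF s P + LF t P := by
  simp only [LF_eq, add_mul, Finset.sum_add_distrib]

lemma LF_smul (k : ℝ) (s : ℕ → ℝ) (P : ℝ[X]) : LF (fun n => k * s n) P = k * LF s P := by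
  simp only [LF_eq, Finset.mul_sum, mul_assoc]

lemma PosOn.add {c : ℝ} {s t : ℕ → ℝ} (h : PosOn c s) (h' : PosOn c t) :
    PosOn c (fun n => s n + t n) := fun P hP => by
  rw [LF_add]; exact add_nonneg (h P hP) (h' P hP)

lemma PosOn.smul {c k : ℝ} {s : ℕ → ℝ} (h : PosOn c s) (hk : 0 ≤ k) :
    PosOn c (fun n => k * s n) := fun P hP => by
  rw [LF_smul]; exact mul_nonneg hk (h P hP)

lemma LF_scale (l : ℝ) (s : ℕ → ℝ) (P : ℝ[X]) :
    LF (fun n => l ^ n * s n) P = LF s (P.comp (C l * X)) := by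
  induction P using Polynomial.induction_on' with
  | add p q hp hq => rw [map_add, add_comp, map_add, hp, hq]
  | monomial n a =>
    rw [← C_mul_X_pow_eq_monomial, LF_mon]
    have : ((C a * X ^ n).comp (C l * X) : ℝ[X]) = C (a * l ^ n) * X ^ n := by
      simp [mul_pow]; ring
    rw [this, LF_mon]; ring

lemma PosOn.scale {c l c' : ℝ} {s : ℕ → ℝ} (h : PosOn c s) (hl : 0 ≤ l) (hc : l * c ≤ c') :
    PosOn c' (fun n => l ^ n * s n) := fun P hP => by
  rw [LF_scale]
  apply h
  intro x h0 h1
  rw [eval_comp]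
  apply hP
  · simp; positivity
  · simp; nlinarith

lemma PosOn.lim {c : ℝ} {s : ℕ → ℕ → ℝ} {t : ℕ → ℝ} (h : ∀ᶠ N in atTop, PosOn c (s N))
    (ht : ∀ n, Tendsto (fun N => s N n) atTop (𝓝 (t n))) : PosOn c t := fun P hP => by
  have h1 : Tendsto (fun N => LF (s N) P) atTop (𝓝 (LF t P)) := by
    simp only [LF_eq]
    exact tendsto_finsetSum _ fun n _ => (ht n).mul_const _
  refine ge_of_tendsto h1 ?_
  filter_upwards [h] with N hN using hN P hP

lemma PosOn.one : PosOn 1 (fun _ => 1) := fun P hP => by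
  have := hP 1 (by norm_num) le_rfl
  rw [LF_eq]
  simpa [Polynomial.eval_eq_sum, Polynomial.sum_def] using this

lemma PosOn.div {c a : ℝ} {s : ℕ → ℝ} (h : PosOn c s) (ha : 0 < a) :
    PosOn c (fun n => s n / (n + a)) := fun P hP => by
  have key : LF (fun n => s n / (n + a)) P =
      ∫ t in (0:ℝ)..1, ∑ n ∈ P.support, s n * P.coeff n * t ^ ((n:ℝ) + a - 1) := by
    rw [intervalIntegral.integral_finsetSum]
    · rw [LF_eq]
      refine Finset.sum_congr rfl fun n _ => ?_
      have hn : (0:ℝ) ≤ n := Nat.cast_nonneg n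
      rw [intervalIntegral.integral_const_mul, integral_rpow (Or.inl (by linarith))]
      rw [sub_add_cancel, Real.one_rpow, Real.zero_rpow (by positivity)]
      ring
    · intro n _
      have hn : (0:ℝ) ≤ n := Nat.cast_nonneg n
      exact (intervalIntegral.intervalIntegrable_rpow' (by linarith)).const_mul _
  rw [key, intervalIntegral.integral_of_le zero_le_one]
  apply MeasureTheory.setIntegral_nonneg measurableSet_Ioc
  rintro t ⟨h0, h1⟩
  have e : ∑ n ∈ P.support, s n * P.coeff n * t ^ ((n:ℝ) + a - 1) =
      t ^ (a - 1) * LF s (P.comp (C t * X)) := by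
    rw [← LF_scale, LF_eq, Finset.mul_sum]
    refine Finset.sum_congr rfl fun n _ => ?_
    rw [add_sub_assoc, Real.rpow_add h0, Real.rpow_natCast]
    ring
  rw [e]
  refine mul_nonneg (Real.rpow_nonneg h0.le _) (h _ ?_)
  intro x hx0 hxc
  rw [eval_comp]
  apply hP
  · simp; positivity
  · simp; nlinarith

lemma PosOn.factor {c u v a b : ℝ} {s : ℕ → ℝ} (h : PosOn c s) (ha : 0 < a) (hu : 0 < u)
    (hv : 0 < v) (hab : a * u ≤ b * v) :
    PosOn c (fun n => s n * ((n * u + b) / (n * v + a))) := by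
  have h1 := ((h.div (a := a / v) (by positivity)).smul
    (k := (b * v - a * u) / v ^ 2) (by apply div_nonneg (by linarith); positivity)).add
      (h.smul (k := u / v) (by positivity))
  convert h1 using 2 with n
  have : (0:ℝ) < n * v + a := by positivity
  field_simp
  ring

noncomputable def FF (p r : ℝ) (B D n : ℕ) : ℝ :=
  (∏ j ∈ Finset.range B, ((n:ℝ) + 1 + j)) * (∏ j ∈ Finset.range D, ((n:ℝ) * (p - 1) + r + 1 + j)) /
    ∏ j ∈ Finset.range (B + D), ((n:ℝ) * p + r + j)

lemma exists_state {p r : ℝ} (hp : 1 < p) (hr : 0 < r) (hrp : r ≤ p) (i : ℕ) :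
    ∃ B D : ℕ, B + D = i ∧ (D = 0 ∨ r + D ≤ (p - 1) * (1 + B)) ∧
      (B = 0 ∨ (p - 1) * B ≤ r + 1 + D) ∧ PosOn 1 (FF p r B D) := by
  induction i with
  | zero =>
    refine ⟨0, 0, rfl, Or.inl rfl, Or.inl rfl, ?_⟩
    convert PosOn.one using 2 with n
    simp [FF]
  | succ i ih =>
    obtain ⟨B, D, hi, h1, h2, h3⟩ := ih
    have hB : (0:ℝ) ≤ B := Nat.cast_nonneg B
    have hD : (0:ℝ) ≤ D := Nat.cast_nonneg D
    have hp1 : 0 < p - 1 := by linarith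
    by_cases hc : (p - 1) * (1 + B) ≤ r + 1 + D
    · refine ⟨B + 1, D, by omega, ?_, ?_, ?_⟩
      · rcases h1 with h1 | h1
        · exact Or.inl h1
        · right; push_cast; nlinarith
      · right; push_cast; linarith
      · have h4 : r + B + D ≤ p * (1 + B) := by
          rcases h1 with h1 | h1
          · subst h1; push_cast; nlinarith
          · nlinarith
        have := h3.factor (u := 1) (v := p) (a := r + (B + D)) (b := 1 + B) (by positivity)
          one_pos (by linarith) (by nlinarith)
        convert this using 2 with n
        unfold FF
        rw [show B + 1 + D = B + D + 1 by ring, Finset.prod_range_succ, Finset.prod_range_succ]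
        push_cast
        rw [mul_one, ← add_assoc (n:ℝ) 1, ← add_assoc ((n:ℝ) * p) r, div_mul_div_comm]
        ring
    · push Not at hc
      refine ⟨B, D + 1, by omega, ?_, ?_, ?_⟩
      · right; push_cast; linarith
      · rcases h2 with h2 | h2
        · exact Or.inl h2
        · right; push_cast; linarith
      · have h4 : (r + (B + D)) * (p - 1) ≤ (r + 1 + D) * p := by
          rcases h2 with h2 | h2
          · subst h2; push_cast; nlinarith
          · nlinarith
        have := h3.factor (u := p - 1) (v := p) (a := r + (B + D)) (b := r + 1 + D) (by positivity)
          hp1 (by linarith) h4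
        convert this using 2 with n
        unfold FF
        rw [show B + (D + 1) = B + D + 1 by ring, Finset.prod_range_succ, Finset.prod_range_succ _ (B + D)]
        push_cast
        rw [← add_assoc ((n:ℝ) * (p - 1)), ← add_assoc ((n:ℝ) * (p - 1)),
          ← add_assoc ((n:ℝ) * p) r, div_mul_div_comm]
        ring

lemma gamma_prod (x : ℝ) (m : ℕ) (hx : (m:ℝ) < x) :
    Real.Gamma x = (∏ i ∈ Finset.range m, (x - 1 - i)) * Real.Gamma (x - m) := by
  induction m with
  | zero => simp
  | succ m ih =>
    push_cast at hx
    rw [ih (by linarith), Finset.prod_range_succ, mul_assoc]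
    congr 1
    have : x - m = (x - 1 - m) + 1 := by ring
    rw [this, Real.Gamma_add_one (by linarith)]
    push_cast
    congr 2
    ring

lemma raney_gamma {p r : ℝ} (hp : 1 < p) (hr : 0 < r) (n : ℕ) :
    raney p r n = r * (Real.Gamma (n * p + r) /
      (Real.Gamma (n + 1) * Real.Gamma (n * (p - 1) + r + 1))) := by
  rcases n with _ | n
  · have := (Real.Gamma_pos_of_pos hr).ne'
    simp [raney, Real.Gamma_add_one hr.ne']
    field_simp
  · have hn : (0:ℝ) ≤ n := Nat.cast_nonneg n
    rw [gamma_prod ((n + 1 : ℕ) * p + r) n (by push_cast; nlinarith), Real.Gamma_nat_eq_factorial]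
    have e : ((n + 1 : ℕ) : ℝ) * p + r - n = ((n + 1 : ℕ) : ℝ) * (p - 1) + r + 1 := by
      push_cast; ring
    rw [e]
    have : 0 < Real.Gamma (((n + 1 : ℕ) : ℝ) * (p - 1) + r + 1) := by
      apply Real.Gamma_pos_of_pos
      have : 0 < p - 1 := by linarith
      positivity
    simp only [raney, gbinom, Nat.add_sub_cancel, Nat.succ_ne_zero, if_false, Nat.factorial_succ]
    have hf : (0:ℝ) < n.factorial := by positivity
    push_cast
    push_cast at this
    generalize Real.Gamma (((n:ℝ) + 1) * (p - 1) + r + 1) = G at *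
    field_simp

lemma gammaSeq_FF {p r : ℝ} (hp : 1 < p) (hr : 0 < r) (b d n : ℕ) (hb : 0 < b) (hd : 0 < d) :
    Real.GammaSeq (n * p + r) (b + d + 1) /
      (Real.GammaSeq (n + 1) b * Real.GammaSeq (n * (p - 1) + r + 1) d) =
    ((b + d + 1 : ℕ) : ℝ) ^ r * ((b + d + 1).factorial) /
        (b * b.factorial * ((d:ℝ) ^ (r + 1) * d.factorial)) *
      ((((b + d + 1 : ℕ) : ℝ) / b * (((b + d + 1 : ℕ) : ℝ) / d) ^ (p - 1)) ^ n *
        FF p r (b + 1) (d + 1) n) := by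
  unfold Real.GammaSeq FF
  rw [show b + 1 + (d + 1) = b + d + 1 + 1 by ring]
  have hN : (0:ℝ) < ((b + d + 1 : ℕ) : ℝ) := by positivity
  have hb' : (0:ℝ) < b := by positivity
  have hd' : (0:ℝ) < d := by positivity
  generalize ((b + d + 1 : ℕ) : ℝ) = N at *
  have e1 : N ^ ((n:ℝ) * p + r) = N ^ r * (N ^ n * (N ^ (p - 1)) ^ n) := by
    rw [← Real.rpow_natCast, ← Real.rpow_natCast, ← Real.rpow_mul hN.le, ← Real.rpow_add hN,
      ← Real.rpow_add hN]
    congr 1; ring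
  have e2 : (b:ℝ) ^ ((n:ℝ) + 1) = (b:ℝ) ^ n * b := by
    rw [Real.rpow_add hb', Real.rpow_natCast, Real.rpow_one]
  have e3 : (d:ℝ) ^ ((n:ℝ) * (p - 1) + r + 1) = ((d:ℝ) ^ (p - 1)) ^ n * (d:ℝ) ^ (r + 1) := by
    rw [← Real.rpow_natCast, ← Real.rpow_mul hd'.le, ← Real.rpow_add hd']
    congr 1; ring
  rw [e1, e2, e3, Real.div_rpow hN.le hd'.le, mul_pow, div_pow, div_pow]
  have h1 : 0 < ∏ j ∈ Finset.range (b + 1), ((n:ℝ) + 1 + j) :=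
    Finset.prod_pos fun j _ => by positivity
  have h2 : 0 < ∏ j ∈ Finset.range (d + 1), ((n:ℝ) * (p - 1) + r + 1 + j) :=
    Finset.prod_pos fun j _ => by have : 0 < p - 1 := by linarith
                                  positivity
  have h3 : 0 < ∏ j ∈ Finset.range (b + d + 1 + 1), ((n:ℝ) * p + r + j) :=
    Finset.prod_pos fun j _ => by have : 0 < p := by linarith
                                  positivity
  have h4 : 0 < (d:ℝ) ^ (p - 1) := Real.rpow_pos_of_pos hd' _
  have h5 : 0 < (d:ℝ) ^ (r + 1) := Real.rpow_pos_of_pos hd' _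
  field_simp

lemma raney_posOn {p r : ℝ} (hp : 1 < p) (hr : 0 < r) (hrp : r ≤ p) :
    ∃ c, 0 < c ∧ PosOn c (raney p r) := by
  have hp1 : 0 < p - 1 := by linarith
  choose B D hBD h1 h2 h3 using exists_state hp hr hrp
  have hsum : ∀ i, (B i : ℝ) + D i = i := fun i => by exact_mod_cast hBD i
  have tB : Tendsto B atTop atTop := by
    rw [← tendsto_natCast_atTop_iff (R := ℝ)]
    have : Tendsto (fun i : ℕ => (i:ℝ) / p - 1) atTop atTop :=
      tendsto_atTop_add_const_right _ _ (tendsto_natCast_atTop_atTop.atTop_div_const (by linarith))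
    refine tendsto_atTop_mono (fun i => ?_) this
    have hB : (0:ℝ) ≤ B i := Nat.cast_nonneg _
    rw [sub_le_iff_le_add, div_le_iff₀ (by linarith), ← hsum i]
    rcases h1 i with h | h
    · rw [h]; push_cast; nlinarith
    · nlinarith
  have tD : Tendsto D atTop atTop := by
    rw [← tendsto_natCast_atTop_iff (R := ℝ)]
    have : Tendsto (fun i : ℕ => (i:ℝ) * ((p - 1) / p) - (r + 1) / p) atTop atTop :=
      tendsto_atTop_add_const_right _ _
        (tendsto_natCast_atTop_atTop.atTop_mul_const (by positivity))
    refine tendsto_atTop_mono (fun i => ?_) this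
    have hD : (0:ℝ) ≤ D i := Nat.cast_nonneg _
    rw [← hsum i, mul_div_assoc', ← sub_div, div_le_iff₀ (by linarith)]
    rcases h2 i with h | h
    · rw [h]; push_cast; nlinarith
    · nlinarith
  set c : ℝ := (3 * p - 2) * (1 + (r + 3) / (p - 1)) ^ (p - 1) with hc
  have h3p : 0 < 3 * p - 2 := by linarith
  refine ⟨c, by positivity, ?_⟩
  have tB1 : Tendsto (fun i => B i - 1) atTop atTop := (tendsto_sub_atTop_nat 1).comp tB
  have tD1 : Tendsto (fun i => D i - 1) atTop atTop := (tendsto_sub_atTop_nat 1).comp tD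
  have tN : Tendsto (fun i => (B i - 1) + (D i - 1) + 1) atTop atTop :=
    tendsto_atTop_mono (fun i => by omega) tB1
  refine PosOn.lim (s := fun i n => r * (Real.GammaSeq (n * p + r) ((B i - 1) + (D i - 1) + 1) /
      (Real.GammaSeq (n + 1) (B i - 1) * Real.GammaSeq (n * (p - 1) + r + 1) (D i - 1)))) ?_ ?_
  · filter_upwards [tB.eventually_ge_atTop 2, tD.eventually_ge_atTop 2] with i hB hD
    obtain ⟨b, hb⟩ : ∃ b, B i = b + 1 := ⟨B i - 1, by omega⟩
    obtain ⟨d, hd⟩ : ∃ d, D i = d + 1 := ⟨D i - 1, by omega⟩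
    have h1 := h1 i
    have h2 := h2 i
    have h3 := h3 i
    rw [hb, hd] at h1 h2 h3
    simp only [hb, hd, Nat.add_sub_cancel]
    have hb0 : 0 < b := by omega
    have hd0 : 0 < d := by omega
    have hb1 : (1:ℝ) ≤ b := by exact_mod_cast hb0
    have hd1 : (1:ℝ) ≤ d := by exact_mod_cast hd0
    simp only [gammaSeq_FF hp hr b d _ hb0 hd0]
    refine PosOn.smul (PosOn.smul (PosOn.scale h3 (by positivity) ?_) (by positivity)) hr.le
    rw [mul_one, hc]
    have h1' := h1.resolve_left (Nat.succ_ne_zero d)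
    have h2' := h2.resolve_left (Nat.succ_ne_zero b)
    push_cast at h1' h2' ⊢
    refine mul_le_mul ?_ (Real.rpow_le_rpow (by positivity) ?_ hp1.le) (by positivity) h3p.le
    · rw [div_le_iff₀ (by positivity)]; nlinarith
    · rw [div_le_iff₀ (by positivity), one_add_div hp1.ne', div_mul_eq_mul_div, le_div_iff₀ hp1]
      nlinarith
  · intro n
    rw [raney_gamma hp hr]
    have g2 : 0 < Real.Gamma ((n:ℝ) + 1) := Real.Gamma_pos_of_pos (by positivity)
    have g3 : 0 < Real.Gamma ((n:ℝ) * (p - 1) + r + 1) := Real.Gamma_pos_of_pos (by positivity)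
    exact (((Real.GammaSeq_tendsto_Gamma _).comp tN).div
      (((Real.GammaSeq_tendsto_Gamma _).comp tB1).mul ((Real.GammaSeq_tendsto_Gamma _).comp tD1))
      (by positivity)).const_mul _

lemma raney_zero_right (p : ℝ) : IsPosDefSeq (raney p 0) := by
  intro m α
  have h : ∀ i j : ℕ, raney p 0 (i + j) * α i * α j =
      if j = 0 then (if i = 0 then α 0 ^ 2 else 0) else 0 := by
    intro i j
    rcases i with _ | i <;> rcases j with _ | j <;> simp [raney, sq]
  simp only [h]
  simp
  positivity

lemma raney_symm (p r : ℝ) (n : ℕ) : raney (1 - p) (-r) n = (-1) ^ n * raney p r n := by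
  rcases n with _ | n
  · simp [raney]
  · simp only [raney, gbinom, Nat.add_sub_cancel, Nat.succ_ne_zero, if_false]
    have : ∏ i ∈ Finset.range n, (((n + 1 : ℕ) : ℝ) * (1 - p) + -r - 1 - i) =
        (-1) ^ n * ∏ i ∈ Finset.range n, (((n + 1 : ℕ) : ℝ) * p + r - 1 - i) := by
      rw [← Finset.prod_range_reflect (fun i : ℕ => ((n + 1 : ℕ) : ℝ) * p + r - 1 - i)]
      have hc : ((-1:ℝ)) ^ n = ∏ _i ∈ Finset.range n, (-1:ℝ) := by simp
      rw [hc, ← Finset.prod_mul_distrib]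
      refine Finset.prod_congr rfl fun i hi => ?_
      have hi := Finset.mem_range.1 hi
      have : ((n - 1 - i : ℕ) : ℝ) = n - 1 - i := by
        rw [Nat.sub_sub, Nat.cast_sub (by omega)]; push_cast; ring
      rw [this]; push_cast; ring
    rw [this, pow_succ]
    ring

lemma posdef_symm {p r : ℝ} (h : IsPosDefSeq (raney p r)) : IsPosDefSeq (raney (1 - p) (-r)) := by
  intro m α
  convert h m (fun i => (-1) ^ i * α i) using 1
  refine Finset.sum_congr rfl fun i _ => Finset.sum_congr rfl fun j _ => ?_
  rw [raney_symm, pow_add]; ring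

lemma raney_suff {p r : ℝ} (hp : 1 ≤ p) (hr : 0 ≤ r) (hrp : r ≤ p) : IsPosDefSeq (raney p r) := by
  rcases hr.eq_or_lt with rfl | hr
  · exact raney_zero_right p
  rcases hp.eq_or_lt with rfl | hp
  · intro m α
    have hcont : ∀ n, Continuous (fun q => raney q r n) := by
      intro n
      rcases n with _ | n
      · simp only [raney, if_true]; exact continuous_const
      · simp only [raney, gbinom, Nat.add_sub_cancel, Nat.succ_ne_zero, if_false]
        fun_prop
    have hc : Continuous (fun q => ∑ i ∈ Finset.range (m + 1), ∑ j ∈ Finset.range (m + 1),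
        raney q r (i + j) * α i * α j) := by fun_prop
    have ht := (hc.tendsto 1).mono_left (nhdsWithin_le_nhds (s := Set.Ioi 1))
    refine ge_of_tendsto ht ?_
    filter_upwards [self_mem_nhdsWithin] with q hq
    obtain ⟨c, _, h⟩ := raney_posOn (p := q) hq hr (hrp.trans (le_of_lt hq))
    exact h.posdef m α
  · obtain ⟨c, _, h⟩ := raney_posOn hp hr hrp
    exact h.posdef

lemma LF_deriv (s : ℕ → ℝ) (Q : ℝ[X]) :
    LF (fun n => s n / (n + 1)) (derivative (X * Q)) = LF s Q := by
  induction Q using Polynomial.induction_on' with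
  | add p q hp hq => rw [mul_add, map_add, map_add, map_add, hp, hq]
  | monomial n a =>
    rw [← C_mul_X_pow_eq_monomial, LF_mon]
    have : derivative (X * (C a * X ^ n) : ℝ[X]) = C (a * (n + 1)) * X ^ n := by
      rw [show (X * (C a * X ^ n) : ℝ[X]) = C a * X ^ (n + 1) by ring, derivative_C_mul_X_pow]
      push_cast; simp
    rw [this, LF_mon]
    have : (n:ℝ) + 1 ≠ 0 := by positivity
    field_simp

lemma LF_X (s : ℕ → ℝ) (Q : ℝ[X]) : LF s (X * Q) = LF (fun n => s (n + 1)) Q := by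
  induction Q using Polynomial.induction_on' with
  | add p q hp hq => rw [mul_add, map_add, map_add, hp, hq]
  | monomial n a =>
    rw [← C_mul_X_pow_eq_monomial, LF_mon,
      show (X * (C a * X ^ n) : ℝ[X]) = C a * X ^ (n + 1) by ring, LF_mon]

lemma geom_sos {s : ℕ → ℝ} (h : IsPosDefSeq s) (u : ℝ[X]) (N : ℕ) :
    s 0 + LF s ((u ^ N) ^ 2) ≤ 2 * LF s (∑ k ∈ Finset.range (2 * N + 1), u ^ k) := by
  induction N with
  | zero => simp [LF_one]; linarith
  | succ N ih =>
    rw [show 2 * (N + 1) + 1 = 2 * N + 1 + 1 + 1 by ring, Finset.sum_range_succ,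
      Finset.sum_range_succ, map_add, map_add]
    have h1 := posdef_LF h (u ^ N * (1 + u))
    have e : (u ^ N * (1 + u)) ^ 2 = (u ^ N) ^ 2 + u ^ (2 * N + 1) + u ^ (2 * N + 1) +
        (u ^ (N + 1)) ^ 2 := by ring
    rw [e, map_add, map_add, map_add] at h1
    have e2 : u ^ (2 * N + 1 + 1) = (u ^ (N + 1)) ^ 2 := by ring
    rw [e2]
    linarith

lemma raney_shift {p r : ℝ} (hp : 1 < p) (hr : p < r) (n : ℕ) :
    raney p (r - p) (n + 1) / (((n + 1 : ℕ) : ℝ) + (r - p + 1) / (p - 1)) =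
      ((r - p) * (p - 1) / r) * (raney p r n / (n + 1)) := by
  have hp1 : 0 < p - 1 := by linarith
  have hq : 0 < r - p + 1 := by linarith
  have hr0 : 0 < r := by linarith
  have e0 : ((n + 1 : ℕ) : ℝ) + (r - p + 1) / (p - 1) = (n * p + r - n) / (p - 1) := by
    push_cast; field_simp; ring
  have hpos : 0 < n * p + r - n := by
    have : (0:ℝ) ≤ n := Nat.cast_nonneg n
    nlinarith
  rw [e0]
  rcases n with _ | n
  · simp [raney, gbinom]; field_simp
  · simp only [raney, gbinom, Nat.add_sub_cancel, Nat.succ_ne_zero, if_false]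
    rw [Finset.prod_range_succ, Nat.factorial_succ]
    have e : ∀ i : ℕ, ((n + 1 + 1 : ℕ) : ℝ) * p + (r - p) - 1 - i = ((n + 1 : ℕ) : ℝ) * p + r - 1 - i := by
      intro i; push_cast; ring
    simp only [e]
    have e1 : ((n + 1 : ℕ) : ℝ) * p + r - 1 - n = ((n + 1 : ℕ) : ℝ) * p + r - ((n + 1 : ℕ) : ℝ) := by
      push_cast; ring
    rw [e1]
    have : (0:ℝ) < n.factorial := by positivity
    push_cast at hpos ⊢
    generalize ((n:ℝ) + 1) * p + r - ((n:ℝ) + 1) = G at *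
    field_simp

lemma raney_nec_big {p r : ℝ} (hp : 1 < p) (hr : p < r) (hr2 : r ≤ 2 * p - 1) :
    ¬ IsPosDefSeq (raney p r) := by
  intro h
  have hp1 : 0 < p - 1 := by linarith
  have hr0 : 0 < r := by linarith
  have hq : 0 < r - p := by linarith
  obtain ⟨c, hc, hpos⟩ := raney_posOn hp hq (by linarith)
  have hH := hpos.div (a := (r - p + 1) / (p - 1)) (by positivity)
  set H : ℕ → ℝ := fun n => raney p (r - p) n / (n + (r - p + 1) / (p - 1)) with hHdef
  set k : ℝ := (r - p) * (p - 1) / r with hk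
  have hk0 : 0 < k := by positivity
  set t : ℕ → ℝ := fun n => raney p r n / (n + 1) with ht
  have hshift : (fun n => H (n + 1)) = fun n => k * t n := by
    funext n; exact raney_shift hp hr n
  set u : ℝ[X] := 1 - C (1 / c) * X with hu
  have hu0 : ∀ x, 0 ≤ x → x ≤ c → 0 ≤ u.eval x := by
    intro x h0 h1
    simp only [hu, eval_sub, eval_one, eval_mul, eval_C, eval_X]
    rw [one_div_mul_eq_div, sub_nonneg, div_le_one hc]; exact h1
  -- telescoping
  have htel : ∀ M, LF H (u ^ M) - LF H (u ^ (M + 1)) = k / c * LF t (u ^ M) := by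
    intro M
    rw [← map_sub, show u ^ M - u ^ (M + 1) = (1 / c) • (X * u ^ M) by
      rw [smul_eq_C_mul, pow_succ]; nth_rewrite 3 [hu]; ring]
    rw [map_smul, LF_X, hshift, LF_smul, smul_eq_mul]; ring
  have hHnn : ∀ M, 0 ≤ LF H (u ^ M) := fun M => hH _ fun x h0 h1 => by
    rw [eval_pow]; exact pow_nonneg (hu0 x h0 h1) _
  have htnn : ∀ M, 0 ≤ LF t (u ^ M) := fun M => by
    have : 0 ≤ k * LF t (u ^ M) := by
      rw [← LF_smul, ← hshift, ← LF_X]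
      refine hH _ fun x h0 h1 => ?_
      rw [eval_mul, eval_pow, eval_X]; exact mul_nonneg h0 (pow_nonneg (hu0 x h0 h1) _)
    exact nonneg_of_mul_nonneg_right this hk0
  have hgeom : ∀ M, LF (raney p r) (∑ j ∈ Finset.range (M + 1), u ^ j) =
      (M + 1) * LF t (u ^ M) := by
    intro M
    rw [← LF_deriv]
    have e : X * ∑ j ∈ Finset.range (M + 1), u ^ j = C c * (1 - u ^ (M + 1)) := by
      have h1 := mul_neg_geom_sum u (M + 1)
      rw [← h1, ← mul_assoc]
      congr 1
      rw [hu, sub_sub_cancel, ← mul_assoc, ← C_mul, mul_one_div_cancel hc.ne', C_1, one_mul]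
    have e2 : derivative (C c * (1 - u ^ (M + 1))) = ((M:ℝ) + 1) • u ^ M := by
      rw [derivative_C_mul, derivative_sub, derivative_one, derivative_pow_succ]
      have : derivative u = - C (1 / c) := by simp [hu]
      rw [this, smul_eq_C_mul, zero_sub, mul_neg, mul_neg, mul_neg, neg_neg]
      rw [show C c * (C ((M:ℝ) + 1) * u ^ M * C (1 / c)) =
        (C c * C (1 / c)) * (C ((M:ℝ) + 1) * u ^ M) by ring, ← C_mul, mul_one_div_cancel hc.ne',
        C_1, one_mul]
    rw [e, e2, map_smul, smul_eq_mul]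
  have hlow : ∀ N : ℕ, 1 / (4 * ((N:ℝ) + 1)) ≤ LF t (u ^ (2 * N)) := by
    intro N
    have h1 := geom_sos h u N
    have h2 := posdef_LF h (u ^ N)
    rw [hgeom] at h1
    have h3 : raney p r 0 = 1 := by simp [raney]
    rw [h3] at h1
    have h4 := htnn (2 * N)
    rw [div_le_iff₀ (by positivity)]
    push_cast at h1
    nlinarith
  have hbd : ∀ N : ℕ, k / c * ∑ i ∈ Finset.range N, 1 / (4 * ((i:ℝ) + 1)) ≤
      LF H 1 - LF H (u ^ (2 * N)) := by
    intro N
    induction N with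
    | zero => simp
    | succ N ih =>
      rw [Finset.sum_range_succ, mul_add]
      have h1 := htel (2 * N)
      have h2 := htel (2 * N + 1)
      have h3 : 0 < k / c := by positivity
      have h4 := mul_le_mul_of_nonneg_left (hlow N) h3.le
      have h5 := mul_nonneg h3.le (htnn (2 * N + 1))
      rw [show 2 * (N + 1) = 2 * N + 1 + 1 by ring]
      linarith
  have hdiv := Real.tendsto_sum_range_one_div_nat_succ_atTop
  obtain ⟨N, hN⟩ := (hdiv.eventually_gt_atTop (4 * (LF H 1) / (k / c))).exists
  have h1 := hbd N
  have h2 := hHnn (2 * N)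
  have h3 : 0 < k / c := by positivity
  rw [div_lt_iff₀ h3] at hN
  have e : ∑ i ∈ Finset.range N, 1 / (4 * ((i:ℝ) + 1)) =
      (1 / 4) * ∑ i ∈ Finset.range N, 1 / ((i:ℝ) + 1) := by
    rw [Finset.mul_sum]
    refine Finset.sum_congr rfl fun i _ => ?_
    field_simp
  rw [e] at h1
  linarith

lemma raney_nec_small {p r : ℝ} (hp : 1 / 2 < p) (hp1 : p < 1) (hr : 0 < r) :
    ¬ IsPosDefSeq (raney p r) := by
  intro h
  have hex : ∃ n : ℕ, 1 < 2 * (n:ℝ) * (1 - p) - r := by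
    obtain ⟨n, hn⟩ := exists_nat_gt ((1 + r) / (2 * (1 - p)))
    rw [div_lt_iff₀ (by linarith)] at hn
    exact ⟨n, by linarith⟩
  classical
  have h1 := Nat.find_spec hex
  have h0 : Nat.find hex ≠ 0 := by
    intro h0; rw [h0] at h1; simp at h1; linarith
  obtain ⟨m, hm⟩ := Nat.exists_eq_succ_of_ne_zero h0
  have h2 := Nat.find_min hex (m := m) (by omega)
  rw [hm] at h1
  push Not at h2
  push_cast at h1
  have hneg : raney p r ((m + 1) + (m + 1)) < 0 := by
    rw [show (m + 1) + (m + 1) = 2 * m + 1 + 1 by ring]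
    simp only [raney, gbinom, Nat.add_sub_cancel, Nat.succ_ne_zero, if_false]
    rw [Finset.prod_range_succ]
    refine mul_neg_of_pos_of_neg (by positivity) (div_neg_of_neg_of_pos ?_ (by positivity))
    refine mul_neg_of_pos_of_neg (Finset.prod_pos fun i hi => ?_) ?_
    · have hi : (i:ℝ) + 1 ≤ 2 * m := by exact_mod_cast Finset.mem_range.1 hi
      push_cast; nlinarith
    · push_cast; nlinarith
  have := h (m + 1) (fun i => if i = m + 1 then 1 else 0)
  simp at this
  linarith

lemma raney_nec_half {p r : ℝ} (hp : 1 / 2 ≤ p) (hr : r ≠ 0) (h : IsPosDefSeq (raney p r)) :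
    1 ≤ p ∧ 0 ≤ r ∧ r ≤ p := by
  have h1 := h 1 (fun i => if i = 0 then -r else 1)
  have e0 : raney p r 0 = 1 := by simp [raney]
  have e1 : raney p r 1 = r := by simp [raney, gbinom]
  have e2 : raney p r 2 = r / 2 * (2 * p + r - 1) := by simp [raney, gbinom]
  simp [Finset.sum_range_succ, e0, e1, e2] at h1
  have h2 : 0 ≤ r * (2 * p - 1 - r) := by nlinarith
  have hr0 : 0 < r := by
    by_contra hn
    have : r < 0 := lt_of_le_of_ne (not_lt.1 hn) hr
    nlinarith
  have hr2 : r ≤ 2 * p - 1 := by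
    by_contra hn; push Not at hn; nlinarith
  have hp1 : 1 ≤ p := by
    by_contra hn; push Not at hn
    exact raney_nec_small (by linarith) hn hr0 h
  refine ⟨hp1, hr0.le, ?_⟩
  by_contra hn; push Not at hn
  exact raney_nec_big (by linarith) hn hr2 h

theorem raney_posdef_iff (p r : ℝ) :
    IsPosDefSeq (raney p r) ↔
      (1 ≤ p ∧ 0 ≤ r ∧ r ≤ p) ∨ (p ≤ 0 ∧ p - 1 ≤ r ∧ r ≤ 0) ∨ r = 0 := by
  constructor
  · intro h
    by_cases hr : r = 0
    · exact Or.inr (Or.inr hr)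
    rcases le_total (1 / 2) p with hp | hp
    · exact Or.inl (raney_nec_half hp hr h)
    · obtain ⟨h1, h2, h3⟩ := raney_nec_half (p := 1 - p) (by linarith) (neg_ne_zero.2 hr)
        (posdef_symm h)
      exact Or.inr (Or.inl ⟨by linarith, by linarith, by linarith⟩)
  · rintro (⟨h1, h2, h3⟩ | ⟨h1, h2, h3⟩ | rfl)
    · exact raney_suff h1 h2 h3
    · have := posdef_symm (raney_suff (p := 1 - p) (r := -r) (by linarith) (by linarith)
        (by linarith))
      simpa using this
    · exact raney_zero_right p
end
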